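/- arXiv:1808.04791 — 12 statements merged into one kernel-verified Lean document; each statement's English description precedes it below -/
import Mathlib

section
/- Let m, n : ℕ and let α = (α₁, …, α_m) and β = (β₁, …, β_n) be lists of elements of Fin χ. Then the fluctuation relation implies the general relation between cumulants and their responses: D[α; β] f = (−1)^m · Σ_{T ⊆ {1, …, n}} D[α ++ β|_T ; β|_{Tᶜ}] g, where the sum runs over all subsets T of the index set {1, …, n}, β|_T is the sublist of β with positions in T, and β|_{Tᶜ} is the complementary sublist. -/
/-- Partial derivative of `F (λ, A)` with respect to the counting parameter `λ_i`. -/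
noncomputable def pderivLam {χ : ℕ} (i : Fin χ)
    (F : (Fin χ → ℝ) → (Fin χ → ℝ) → ℝ) : (Fin χ → ℝ) → (Fin χ → ℝ) → ℝ :=
  fun l a => fderiv ℝ (fun l' => F l' a) l (Pi.single i 1)

/-- Partial derivative of `F (λ, A)` with respect to the affinity `A_i`. -/
noncomputable def pderivAff {χ : ℕ} (i : Fin χ)
    (F : (Fin χ → ℝ) → (Fin χ → ℝ) → ℝ) : (Fin χ → ℝ) → (Fin χ → ℝ) → ℝ :=
  fun l a => fderiv ℝ (fun a' => F l a') a (Pi.single i 1)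

/-- Mixed partial derivative `D[α; β] F`: derivatives with respect to the counting
parameters `λ_{α₁}, …, λ_{α_m}` and the affinities `A_{β₁}, …, A_{β_n}`, evaluated at
`(λ, A) = (0, 0)`. -/
noncomputable def Dmix {χ : ℕ} (α β : List (Fin χ))
    (F : (Fin χ → ℝ) → (Fin χ → ℝ) → ℝ) : ℝ :=
  (List.foldr pderivLam (List.foldr pderivAff F β) α) 0 0

/-- Joint smoothness. -/
def GRSm {χ : ℕ} (F : (Fin χ → ℝ) → (Fin χ → ℝ) → ℝ) : Prop :=
  ContDiff ℝ (⊤ : ℕ∞) (Function.uncurry F)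

/-- The substitution `(l, A) ↦ (A - l, A)`. -/
def grS {χ : ℕ} (F : (Fin χ → ℝ) → (Fin χ → ℝ) → ℝ) : (Fin χ → ℝ) → (Fin χ → ℝ) → ℝ :=
  fun l a => F (a - l) a

theorem GRSm.hasFDerivAt {χ : ℕ} {F : (Fin χ → ℝ) → (Fin χ → ℝ) → ℝ} (h : GRSm F)
    (p : (Fin χ → ℝ) × (Fin χ → ℝ)) :
    HasFDerivAt (Function.uncurry F) (fderiv ℝ (Function.uncurry F) p) p :=
  (ContDiff.differentiable h (by simp)).differentiableAt.hasFDerivAt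

theorem gr_lam_eq {χ : ℕ} {F : (Fin χ → ℝ) → (Fin χ → ℝ) → ℝ} (h : GRSm F) (i : Fin χ)
    (l a : Fin χ → ℝ) :
    pderivLam i F l a = fderiv ℝ (Function.uncurry F) (l, a) (Pi.single i 1, 0) := by
  have h1 : HasFDerivAt (fun l' : Fin χ → ℝ => F l' a) _ l :=
    HasFDerivAt.comp (g := Function.uncurry F) (f := fun l' : Fin χ → ℝ => (l', a)) l
      (h.hasFDerivAt (l, a)) ((hasFDerivAt_id l).prodMk (hasFDerivAt_const a l))
  unfold pderivLam
  rw [h1.fderiv]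
  simp

theorem gr_aff_eq {χ : ℕ} {F : (Fin χ → ℝ) → (Fin χ → ℝ) → ℝ} (h : GRSm F) (i : Fin χ)
    (l a : Fin χ → ℝ) :
    pderivAff i F l a = fderiv ℝ (Function.uncurry F) (l, a) (0, Pi.single i 1) := by
  have h1 : HasFDerivAt (fun a' : Fin χ → ℝ => F l a') _ a :=
    HasFDerivAt.comp (g := Function.uncurry F) (f := fun a' : Fin χ → ℝ => (l, a')) a
      (h.hasFDerivAt (l, a)) ((hasFDerivAt_const l a).prodMk (hasFDerivAt_id a))
  unfold pderivAff
  rw [h1.fderiv]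
  simp

theorem gr_smooth_dir {χ : ℕ} {F : (Fin χ → ℝ) → (Fin χ → ℝ) → ℝ} (h : GRSm F)
    (v : (Fin χ → ℝ) × (Fin χ → ℝ)) :
    ContDiff ℝ (⊤ : ℕ∞) (fun p => fderiv ℝ (Function.uncurry F) p v) :=
  (ContDiff.fderiv_right (m := (⊤ : ℕ∞)) h (by norm_cast)).clm_apply contDiff_const

theorem gr_lam_unc {χ : ℕ} {F : (Fin χ → ℝ) → (Fin χ → ℝ) → ℝ} (h : GRSm F) (i : Fin χ) :
    Function.uncurry (pderivLam i F) =
      fun p => fderiv ℝ (Function.uncurry F) p (Pi.single i 1, 0) := by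
  funext p
  exact gr_lam_eq h i p.1 p.2

theorem gr_aff_unc {χ : ℕ} {F : (Fin χ → ℝ) → (Fin χ → ℝ) → ℝ} (h : GRSm F) (i : Fin χ) :
    Function.uncurry (pderivAff i F) =
      fun p => fderiv ℝ (Function.uncurry F) p (0, Pi.single i 1) := by
  funext p
  exact gr_aff_eq h i p.1 p.2

theorem GRSm.lam {χ : ℕ} {F : (Fin χ → ℝ) → (Fin χ → ℝ) → ℝ} (h : GRSm F) (i : Fin χ) :
    GRSm (pderivLam i F) := by
  unfold GRSm
  rw [gr_lam_unc h]
  exact gr_smooth_dir h _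

theorem GRSm.aff {χ : ℕ} {F : (Fin χ → ℝ) → (Fin χ → ℝ) → ℝ} (h : GRSm F) (i : Fin χ) :
    GRSm (pderivAff i F) := by
  unfold GRSm
  rw [gr_aff_unc h]
  exact gr_smooth_dir h _

theorem GRSm.add {χ : ℕ} {F G : (Fin χ → ℝ) → (Fin χ → ℝ) → ℝ} (h : GRSm F) (h' : GRSm G) :
    GRSm (F + G) :=
  ContDiff.add h h'

theorem GRSm.S {χ : ℕ} {F : (Fin χ → ℝ) → (Fin χ → ℝ) → ℝ} (h : GRSm F) : GRSm (grS F) :=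
  ContDiff.comp (g := Function.uncurry F)
    (f := fun p : (Fin χ → ℝ) × (Fin χ → ℝ) => (p.2 - p.1, p.2)) h
    ((contDiff_snd.sub contDiff_fst).prodMk contDiff_snd)

theorem gr_lam_add {χ : ℕ} {F G : (Fin χ → ℝ) → (Fin χ → ℝ) → ℝ} (h : GRSm F) (h' : GRSm G)
    (i : Fin χ) : pderivLam i (F + G) = pderivLam i F + pderivLam i G := by
  funext l a
  have e : fderiv ℝ (Function.uncurry (F + G)) (l, a) = _ :=
    ((h.hasFDerivAt (l, a)).add (h'.hasFDerivAt (l, a))).fderiv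
  rw [gr_lam_eq (h.add h'), Pi.add_apply, Pi.add_apply, gr_lam_eq h, gr_lam_eq h', e]
  rfl

theorem gr_aff_add {χ : ℕ} {F G : (Fin χ → ℝ) → (Fin χ → ℝ) → ℝ} (h : GRSm F) (h' : GRSm G)
    (i : Fin χ) : pderivAff i (F + G) = pderivAff i F + pderivAff i G := by
  funext l a
  have e : fderiv ℝ (Function.uncurry (F + G)) (l, a) = _ :=
    ((h.hasFDerivAt (l, a)).add (h'.hasFDerivAt (l, a))).fderiv
  rw [gr_aff_eq (h.add h'), Pi.add_apply, Pi.add_apply, gr_aff_eq h, gr_aff_eq h', e]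
  rfl

theorem gr_S_fderiv {χ : ℕ} {F : (Fin χ → ℝ) → (Fin χ → ℝ) → ℝ} (h : GRSm F)
    (l a u v : Fin χ → ℝ) :
    fderiv ℝ (Function.uncurry (grS F)) (l, a) (u, v) =
      fderiv ℝ (Function.uncurry F) (a - l, a) (v - u, v) := by
  have e : HasFDerivAt (Function.uncurry (grS F)) _ (l, a) :=
    HasFDerivAt.comp (g := Function.uncurry F)
      (f := fun p : (Fin χ → ℝ) × (Fin χ → ℝ) => (p.2 - p.1, p.2)) (l, a)
      (h.hasFDerivAt (a - l, a)) ((hasFDerivAt_snd.sub hasFDerivAt_fst).prodMk hasFDerivAt_snd)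
  rw [e.fderiv]
  simp

theorem gr_lam_S {χ : ℕ} {F : (Fin χ → ℝ) → (Fin χ → ℝ) → ℝ} (h : GRSm F) (i : Fin χ) :
    pderivLam i (grS F) = (-1 : ℝ) • grS (pderivLam i F) := by
  funext l a
  rw [gr_lam_eq h.S, gr_S_fderiv h]
  simp only [Pi.smul_apply, grS]
  rw [gr_lam_eq h, ← map_smul]
  simp

theorem gr_aff_S {χ : ℕ} {F : (Fin χ → ℝ) → (Fin χ → ℝ) → ℝ} (h : GRSm F) (i : Fin χ) :
    pderivAff i (grS F) = grS (pderivLam i F + pderivAff i F) := by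
  funext l a
  rw [gr_aff_eq h.S, gr_S_fderiv h]
  simp only [Pi.add_apply, grS]
  rw [gr_lam_eq h, gr_aff_eq h, ← map_add]
  simp

theorem gr_lam_smul {χ : ℕ} {F : (Fin χ → ℝ) → (Fin χ → ℝ) → ℝ} (h : GRSm F) (c : ℝ)
    (i : Fin χ) : pderivLam i (c • F) = c • pderivLam i F := by
  funext l a
  have hs : GRSm (c • F) := ContDiff.const_smul c h
  have e : fderiv ℝ (Function.uncurry (c • F)) (l, a) = _ :=
    ((h.hasFDerivAt (l, a)).const_smul c).fderiv
  rw [gr_lam_eq hs, Pi.smul_apply, Pi.smul_apply, gr_lam_eq h, e]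
  rfl

theorem gr_comm {χ : ℕ} {F : (Fin χ → ℝ) → (Fin χ → ℝ) → ℝ} (h : GRSm F) (i j : Fin χ) :
    pderivAff i (pderivLam j F) = pderivLam j (pderivAff i F) := by
  funext l a
  rw [gr_aff_eq (h.lam j), gr_lam_eq (h.aff i), gr_lam_unc h, gr_aff_unc h]
  have hd : DifferentiableAt ℝ (fderiv ℝ (Function.uncurry F)) (l, a) :=
    ((ContDiff.fderiv_right (m := (⊤ : ℕ∞)) h (by norm_cast)).differentiable
      (by simp)).differentiableAt
  have hsym : IsSymmSndFDerivAt ℝ (Function.uncurry F) (l, a) :=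
    (ContDiff.contDiffAt h).isSymmSndFDerivAt (by
      rw [minSmoothness_of_isRCLikeNormedField]; exact WithTop.coe_le_coe.2 (le_top : (2 : ℕ∞) ≤ ⊤))
  rw [fderiv_clm_apply hd (by fun_prop), fderiv_clm_apply hd (by fun_prop)]
  simpa using hsym.eq _ _

theorem gr_lams_sm {χ : ℕ} (s : List (Fin χ)) {F : (Fin χ → ℝ) → (Fin χ → ℝ) → ℝ}
    (h : GRSm F) : GRSm (List.foldr pderivLam F s) := by
  induction s with
  | nil => exact h
  | cons i s ih => exact ih.lam i

theorem gr_affs_sm {χ : ℕ} (s : List (Fin χ)) {F : (Fin χ → ℝ) → (Fin χ → ℝ) → ℝ}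
    (h : GRSm F) : GRSm (List.foldr pderivAff F s) := by
  induction s with
  | nil => exact h
  | cons i s ih => exact ih.aff i

theorem gr_comm_lams {χ : ℕ} (s : List (Fin χ)) {F : (Fin χ → ℝ) → (Fin χ → ℝ) → ℝ}
    (h : GRSm F) (i : Fin χ) :
    pderivAff i (List.foldr pderivLam F s) = List.foldr pderivLam (pderivAff i F) s := by
  induction s with
  | nil => rfl
  | cons j s ih => rw [List.foldr_cons, List.foldr_cons, gr_comm (gr_lams_sm s h), ih]

/-- Sum over all splittings of a list into a sublist and its complement. -/
def grsum {κ M : Type*} [AddCommMonoid M] : List κ → (List κ → List κ → M) → M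
  | [], Φ => Φ [] []
  | b :: β, Φ => grsum β (fun s t => Φ s (b :: t)) + grsum β (fun s t => Φ (b :: s) t)

theorem gr_sum_finset_succ {M : Type*} [AddCommMonoid M] {n : ℕ} (φ : Finset (Fin (n + 1)) → M) :
    ∑ T, φ T = ∑ T : Finset (Fin n), φ (T.image Fin.succ) +
      ∑ T : Finset (Fin n), φ (insert 0 (T.image Fin.succ)) := by
  have hu : (Finset.univ : Finset (Finset (Fin (n + 1)))) =
      (insert (0 : Fin (n + 1)) (Finset.univ.image Fin.succ)).powerset := by
    rw [← Finset.powerset_univ, Fin.univ_succ, Finset.cons_eq_insert, Finset.map_eq_image]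
    rfl
  have hinj : Function.Injective (Finset.image (Fin.succ (n := n))) :=
    Finset.image_injective (Fin.succ_injective _)
  have h0 : (0 : Fin (n + 1)) ∉ Finset.univ.image (Fin.succ (n := n)) := by
    simp
  rw [hu, Finset.sum_powerset_insert h0, Finset.powerset_image, Finset.sum_image hinj.injOn,
    Finset.sum_image hinj.injOn, Finset.powerset_univ]

theorem grsum_eq {κ M : Type*} [AddCommMonoid M] (β : List κ) (Φ : List κ → List κ → M) :
    ∑ T : Finset (Fin β.length),
      Φ (((List.finRange β.length).filter (· ∈ T)).map β.get)
        (((List.finRange β.length).filter (· ∉ T)).map β.get) = grsum β Φ := by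
  induction β generalizing Φ with
  | nil => simp [grsum]
  | cons b β ih =>
    rw [grsum, ← ih, ← ih]
    refine (gr_sum_finset_succ (n := β.length) _).trans ?_
    congr 1
    · refine Finset.sum_congr rfl fun T _ => ?_
      simp [List.finRange_succ, List.filter_map, Function.comp_def]
      rfl
    · refine Finset.sum_congr rfl fun T _ => ?_
      simp [List.finRange_succ, List.filter_map, Function.comp_def]
      rfl

theorem grsum_sm {χ : ℕ} (β : List (Fin χ))
    (Φ : List (Fin χ) → List (Fin χ) → (Fin χ → ℝ) → (Fin χ → ℝ) → ℝ)
    (h : ∀ s t, GRSm (Φ s t)) : GRSm (grsum β Φ) := by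
  induction β generalizing Φ with
  | nil => exact h _ _
  | cons b β ih => exact (ih _ fun s t => h _ _).add (ih _ fun s t => h _ _)

theorem grsum_lam {χ : ℕ} (β : List (Fin χ)) (i : Fin χ)
    (Φ : List (Fin χ) → List (Fin χ) → (Fin χ → ℝ) → (Fin χ → ℝ) → ℝ)
    (h : ∀ s t, GRSm (Φ s t)) :
    pderivLam i (grsum β Φ) = grsum β fun s t => pderivLam i (Φ s t) := by
  induction β generalizing Φ with
  | nil => rfl
  | cons b β ih =>
    rw [grsum, grsum, gr_lam_add (grsum_sm _ _ fun s t => h _ _) (grsum_sm _ _ fun s t => h _ _),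
      ih _ fun s t => h _ _, ih _ fun s t => h _ _]

theorem grsum_aff {χ : ℕ} (β : List (Fin χ)) (i : Fin χ)
    (Φ : List (Fin χ) → List (Fin χ) → (Fin χ → ℝ) → (Fin χ → ℝ) → ℝ)
    (h : ∀ s t, GRSm (Φ s t)) :
    pderivAff i (grsum β Φ) = grsum β fun s t => pderivAff i (Φ s t) := by
  induction β generalizing Φ with
  | nil => rfl
  | cons b β ih =>
    rw [grsum, grsum, gr_aff_add (grsum_sm _ _ fun s t => h _ _) (grsum_sm _ _ fun s t => h _ _),
      ih _ fun s t => h _ _, ih _ fun s t => h _ _]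

theorem grsum_lams {χ : ℕ} (β α : List (Fin χ))
    (Φ : List (Fin χ) → List (Fin χ) → (Fin χ → ℝ) → (Fin χ → ℝ) → ℝ)
    (h : ∀ s t, GRSm (Φ s t)) :
    List.foldr pderivLam (grsum β Φ) α = grsum β fun s t => List.foldr pderivLam (Φ s t) α := by
  induction α with
  | nil => rfl
  | cons i α ih =>
    rw [List.foldr_cons, ih, grsum_lam _ _ _ fun s t => gr_lams_sm α (h s t)]
    rfl

theorem grsum_apply {κ X Y : Type*} (β : List κ) (Φ : List κ → List κ → X → Y → ℝ) (x : X)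
    (y : Y) : grsum β Φ x y = grsum β fun s t => Φ s t x y := by
  induction β generalizing Φ with
  | nil => rfl
  | cons b β ih => rw [grsum, grsum, Pi.add_apply, Pi.add_apply, ih, ih]

theorem gr_affs_S {χ : ℕ} (β : List (Fin χ)) {g : (Fin χ → ℝ) → (Fin χ → ℝ) → ℝ}
    (h : GRSm g) : List.foldr pderivAff (grS g) β =
      grS (grsum β fun s t => List.foldr pderivLam (List.foldr pderivAff g t) s) := by
  have hs : ∀ s t : List (Fin χ), GRSm (List.foldr pderivLam (List.foldr pderivAff g t) s) :=
    fun s t => gr_lams_sm s (gr_affs_sm t h)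
  induction β with
  | nil => rfl
  | cons b β ih =>
    rw [List.foldr_cons, ih, gr_aff_S (grsum_sm _ _ hs), grsum_lam _ _ _ hs, grsum_aff _ _ _ hs,
      grsum, add_comm]
    congr 3
    funext s t
    exact gr_comm_lams s (gr_affs_sm t h) b

theorem gr_lams_S {χ : ℕ} (α : List (Fin χ)) {g : (Fin χ → ℝ) → (Fin χ → ℝ) → ℝ}
    (h : GRSm g) : List.foldr pderivLam (grS g) α =
      (-1 : ℝ) ^ α.length • grS (List.foldr pderivLam g α) := by
  induction α with
  | nil => simp
  | cons i α ih =>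
    rw [List.foldr_cons, ih, gr_lam_smul (gr_lams_sm α h).S, gr_lam_S (gr_lams_sm α h), smul_smul,
      List.length_cons, pow_succ]
    rfl

/-- The fluctuation relation implies the general relation between cumulants and their
responses: `D[α; β] f = (−1)^m Σ_{T ⊆ {1,…,n}} D[α ++ β|_T ; β|_{Tᶜ}] g`. -/
theorem general_relation_cumulants_responses {χ : ℕ} (hχ : 1 ≤ χ)
    (f g : (Fin χ → ℝ) → (Fin χ → ℝ) → ℝ)
    (hf : ContDiff ℝ (⊤ : ℕ∞) (Function.uncurry f))
    (hg : ContDiff ℝ (⊤ : ℕ∞) (Function.uncurry g))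
    (hFR : ∀ l A : Fin χ → ℝ, f l A = g (A - l) A)
    (α β : List (Fin χ)) :
    Dmix α β f =
      (-1 : ℝ) ^ α.length *
        ∑ T : Finset (Fin β.length),
          Dmix (α ++ ((List.finRange β.length).filter (· ∈ T)).map β.get)
            (((List.finRange β.length).filter (· ∉ T)).map β.get) g := by
  have hfg : f = grS g := by
    funext l a
    exact hFR l a
  have hs : ∀ s t : List (Fin χ), GRSm (List.foldr pderivLam (List.foldr pderivAff g t) s) :=
    fun s t => gr_lams_sm s (gr_affs_sm t hg)
  rw [grsum_eq β (fun s t => Dmix (α ++ s) t g)]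
  unfold Dmix
  rw [hfg, gr_affs_S β hg, gr_lams_S α (grsum_sm _ _ hs), grsum_lams _ _ _ hs]
  simp only [Pi.smul_apply, smul_eq_mul, grS, sub_self, grsum_apply, List.foldr_append]
end

section
/- For every m : ℕ and every list α = (α₁, …, α_m) of elements of Fin χ, the equilibrium cumulants satisfy the parity relation D[α; ∅] f = (−1)^m · D[α; ∅] g; that is, the m-th statistical cumulant at zero affinity is even in the magnetic field when m is even and odd in the magnetic field when m is odd. -/
theorem foldr_pderivLam_FR {χ : ℕ} (f g : (Fin χ → ℝ) → (Fin χ → ℝ) → ℝ)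
    (hFR : ∀ l A : Fin χ → ℝ, f l A = g (A - l) A) (α : List (Fin χ)) :
    ∀ l A : Fin χ → ℝ, List.foldr pderivLam f α l A
      = (-1 : ℝ) ^ α.length * List.foldr pderivLam g α (A - l) A := by
  induction α with
  | nil => intro l A; simpa using hFR l A
  | cons i t ih =>
    intro l A
    simp only [List.foldr_cons, List.length_cons]
    generalize List.foldr pderivLam f t = F at ih
    generalize List.foldr pderivLam g t = G at ih
    have h1 : (fun l' => F l' A) = (-1 : ℝ) ^ t.length • (fun l' => G (A - l') A) := by
      funext l'
      simpa using ih l' A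
    have h2 : fderiv ℝ (fun l' => G (A - l') A) l = - fderiv ℝ (fun l' => G l' A) (A - l) := by
      have e := (ContinuousLinearEquiv.neg ℝ (M := Fin χ → ℝ)).comp_right_fderiv
        (f := fun l' => G (A + l') A) (x := l)
      have e2 := fderiv_comp_add_left (𝕜 := ℝ) (f := fun l' => G l' A) (x := -l) A
      have e3 : ((fun l' => G (A + l') A) ∘ (ContinuousLinearEquiv.neg ℝ (M := Fin χ → ℝ)))
          = fun l' => G (A - l') A := by
        funext l'
        simp [sub_eq_add_neg]
      rw [e3] at e
      rw [e]
      ext v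
      simp [e2, sub_eq_add_neg]
    unfold pderivLam
    rw [h1, fderiv_const_smul_field, Pi.smul_apply, h2]
    simp [pow_succ]

/-- Parity of the equilibrium cumulants: `D[α; ∅] f = (−1)^m D[α; ∅] g`. -/
theorem parity_of_cumulants {χ : ℕ} (hχ : 1 ≤ χ)
    (f g : (Fin χ → ℝ) → (Fin χ → ℝ) → ℝ)
    (hf : ContDiff ℝ (⊤ : ℕ∞) (Function.uncurry f))
    (hg : ContDiff ℝ (⊤ : ℕ∞) (Function.uncurry g))
    (hFR : ∀ l A : Fin χ → ℝ, f l A = g (A - l) A)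
    (α : List (Fin χ)) :
    Dmix α [] f = (-1 : ℝ) ^ α.length * Dmix α [] g := by
  have h := foldr_pderivLam_FR f g hFR α 0 0
  rw [sub_zero] at h
  exact h
end

section
/- For all α, β : Fin χ, the first response coefficients and the second cumulants at equilibrium satisfy D[(α); (β)] f + D[(α); (β)] g = − D[(α, β); ∅] f; that is, the sum of the first response coefficient at B and at −B equals minus the equilibrium second cumulant. -/
lemma pderivLam_eq_aux {χ : ℕ} (i : Fin χ) (h : (Fin χ → ℝ) → (Fin χ → ℝ) → ℝ)
    (hh : Differentiable ℝ (Function.uncurry h)) (l a : Fin χ → ℝ) :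
    pderivLam i h l a = fderiv ℝ (Function.uncurry h) (l, a) (Pi.single i 1, 0) := by
  have h1 : HasFDerivAt (fun l' : Fin χ → ℝ => (l', a)) _ l :=
    (hasFDerivAt_id (𝕜 := ℝ) l).prodMk (hasFDerivAt_const (𝕜 := ℝ) a l)
  have h2 := (hh (l, a)).hasFDerivAt.comp l h1
  have h3 : fderiv ℝ (fun l' => h l' a) l = _ := h2.fderiv
  unfold pderivLam
  rw [h3]
  simp

lemma pderivAff_eq_aux {χ : ℕ} (i : Fin χ) (h : (Fin χ → ℝ) → (Fin χ → ℝ) → ℝ)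
    (hh : Differentiable ℝ (Function.uncurry h)) (l a : Fin χ → ℝ) :
    pderivAff i h l a = fderiv ℝ (Function.uncurry h) (l, a) (0, Pi.single i 1) := by
  have h1 : HasFDerivAt (fun a' : Fin χ → ℝ => (l, a')) _ a :=
    (hasFDerivAt_const (𝕜 := ℝ) l a).prodMk (hasFDerivAt_id (𝕜 := ℝ) a)
  have h2 := (hh (l, a)).hasFDerivAt.comp a h1
  have h3 : fderiv ℝ (fun a' => h l a') a = _ := h2.fderiv
  unfold pderivAff
  rw [h3]
  simp

lemma pderivLam_refl_aux {χ : ℕ} (i : Fin χ) (h : (Fin χ → ℝ) → (Fin χ → ℝ) → ℝ)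
    (hh : Differentiable ℝ (Function.uncurry h)) (l a : Fin χ → ℝ) :
    pderivLam i (fun l a => h (a - l) a) l a = - pderivLam i h (a - l) a := by
  rw [pderivLam_eq_aux i h hh]
  have h1 : HasFDerivAt (fun l' : Fin χ → ℝ => (a - l', a)) _ l :=
    ((hasFDerivAt_id (𝕜 := ℝ) l).const_sub a).prodMk (hasFDerivAt_const (𝕜 := ℝ) a l)
  have h2 := (hh (a - l, a)).hasFDerivAt.comp l h1
  have h3 : fderiv ℝ (fun l' => h (a - l') a) l = _ := h2.fderiv
  unfold pderivLam
  rw [h3, ← map_neg]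
  simp

lemma pderivAff_refl_aux {χ : ℕ} (i : Fin χ) (h : (Fin χ → ℝ) → (Fin χ → ℝ) → ℝ)
    (hh : Differentiable ℝ (Function.uncurry h)) (l a : Fin χ → ℝ) :
    pderivAff i (fun l a => h (a - l) a) l a
      = pderivLam i h (a - l) a + pderivAff i h (a - l) a := by
  rw [pderivLam_eq_aux i h hh, pderivAff_eq_aux i h hh, ← map_add]
  have h1 : HasFDerivAt (fun a' : Fin χ → ℝ => (a' - l, a')) _ a :=
    ((hasFDerivAt_id (𝕜 := ℝ) a).sub_const l).prodMk (hasFDerivAt_id (𝕜 := ℝ) a)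
  have h2 := HasFDerivAt.comp (f := fun a' : Fin χ → ℝ => (a' - l, a')) a
    (hh (a - l, a)).hasFDerivAt h1
  have h3 : fderiv ℝ (fun a' => h (a' - l) a') a = _ := h2.fderiv
  unfold pderivAff
  rw [h3]
  simp

/-- `Q_{α,β}(B) + Q_{α,β}(−B) = − Q_{αβ}(0; B)`. -/
theorem first_response_from_second_cumulant {χ : ℕ} (hχ : 1 ≤ χ)
    (f g : (Fin χ → ℝ) → (Fin χ → ℝ) → ℝ)
    (hf : ContDiff ℝ (⊤ : ℕ∞) (Function.uncurry f))
    (hg : ContDiff ℝ (⊤ : ℕ∞) (Function.uncurry g))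
    (hFR : ∀ l A : Fin χ → ℝ, f l A = g (A - l) A)
    (α β : Fin χ) :
    Dmix [α] [β] f + Dmix [α] [β] g = - Dmix [α, β] [] f := by
  have hgd : Differentiable ℝ (Function.uncurry g) := hg.differentiable (by simp)
  have hfd : Differentiable ℝ (fderiv ℝ (Function.uncurry g)) :=
    (hg.fderiv_right (m := 1) (by norm_cast)).differentiable (by simp)
  have hL : Differentiable ℝ (Function.uncurry (pderivLam β g)) := by
    have : Function.uncurry (pderivLam β g)
        = fun p => fderiv ℝ (Function.uncurry g) p (Pi.single β 1, 0) := by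
      funext p
      exact pderivLam_eq_aux β g hgd p.1 p.2
    rw [this]
    exact hfd.clm_apply (differentiable_const _)
  have hA : Differentiable ℝ (Function.uncurry (pderivAff β g)) := by
    have : Function.uncurry (pderivAff β g)
        = fun p => fderiv ℝ (Function.uncurry g) p (0, Pi.single β 1) := by
      funext p
      exact pderivAff_eq_aux β g hgd p.1 p.2
    rw [this]
    exact hfd.clm_apply (differentiable_const _)
  obtain rfl : f = fun l a => g (a - l) a := by
    funext l a
    exact hFR l a
  have e1 : pderivLam β (fun l a => g (a - l) a)
      = fun l a => (fun l a => - pderivLam β g l a) (a - l) a := by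
    funext l a
    exact pderivLam_refl_aux β g hgd l a
  have e2 : pderivAff β (fun l a => g (a - l) a)
      = fun l a => (fun l a => pderivLam β g l a + pderivAff β g l a) (a - l) a := by
    funext l a
    exact pderivAff_refl_aux β g hgd l a
  have hN : Differentiable ℝ (Function.uncurry (fun l a => - pderivLam β g l a)) := hL.neg
  have hS : Differentiable ℝ
      (Function.uncurry (fun l a => pderivLam β g l a + pderivAff β g l a)) := hL.add hA
  have n1 : fderiv ℝ (Function.uncurry (fun l a => - pderivLam β g l a)) (0, 0)
      = - fderiv ℝ (Function.uncurry (pderivLam β g)) (0, 0) := (hL (0, 0)).hasFDerivAt.neg.fderiv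
  have n2 : fderiv ℝ (Function.uncurry (fun l a => pderivLam β g l a + pderivAff β g l a)) (0, 0)
      = fderiv ℝ (Function.uncurry (pderivLam β g)) (0, 0)
        + fderiv ℝ (Function.uncurry (pderivAff β g)) (0, 0) :=
    ((hL (0, 0)).hasFDerivAt.add (hA (0, 0)).hasFDerivAt).fderiv
  simp only [Dmix, List.foldr_cons, List.foldr_nil]
  rw [e1, e2, pderivLam_refl_aux α _ hN, pderivLam_refl_aux α _ hS, sub_zero,
    pderivLam_eq_aux α _ hN, pderivLam_eq_aux α _ hS, pderivLam_eq_aux α _ hA, n1, n2]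
  simp
end

section
/- (Onsager–Casimir reciprocity relations.) For all α, β : Fin χ, the linear response coefficients satisfy D[(α); (β)] f = D[(β); (α)] g; that is, Q_{α,β}(B) = Q_{β,α}(−B). -/
theorem second_fderiv_comp {E E' : Type*} [NormedAddCommGroup E] [NormedSpace ℝ E]
    [NormedAddCommGroup E'] [NormedSpace ℝ E'] (H : E → ℝ)
    (hH : ContDiff ℝ (⊤ : ℕ∞) H) (L : E' →L[ℝ] E) (x y : E') :
    fderiv ℝ (fderiv ℝ (fun z => H (L z))) 0 x y
      = fderiv ℝ (fderiv ℝ H) 0 (L x) (L y) := by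
  have hd : Differentiable ℝ H := hH.differentiable (by simp)
  have hd2 : Differentiable ℝ (fderiv ℝ H) :=
    (hH.fderiv_right (m := 1) (by norm_cast)).differentiable (by simp)
  have h1 : fderiv ℝ (fun z => H (L z)) = fun z => (fderiv ℝ H (L z)).comp L := by
    funext z
    exact ((hd (L z)).hasFDerivAt.comp z L.hasFDerivAt).fderiv
  have h2 : HasFDerivAt (fun z => fderiv ℝ H (L z))
      ((fderiv ℝ (fderiv ℝ H) (L 0)).comp L) 0 :=
    (hd2 (L 0)).hasFDerivAt.comp (0 : E') L.hasFDerivAt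
  rw [h1, (h2.clm_comp (hasFDerivAt_const L (0 : E'))).fderiv]
  simp

theorem Dmix_eq {χ : ℕ} (F : (Fin χ → ℝ) → (Fin χ → ℝ) → ℝ)
    (hF : ContDiff ℝ (⊤ : ℕ∞) (Function.uncurry F)) (i j : Fin χ) :
    Dmix [i] [j] F = fderiv ℝ (fderiv ℝ (Function.uncurry F)) 0
      (Pi.single i 1, 0) (0, Pi.single j 1) := by
  have hd : Differentiable ℝ (Function.uncurry F) := hF.differentiable (by simp)
  have hd2 : Differentiable ℝ (fderiv ℝ (Function.uncurry F)) :=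
    (hF.fderiv_right (m := 1) (by norm_cast)).differentiable (by simp)
  have h1 : ∀ l a, pderivAff j F l a
      = fderiv ℝ (Function.uncurry F) (l, a) (0, Pi.single j 1) := by
    intro l a
    have h := (hd (l, a)).hasFDerivAt.comp a (hasFDerivAt_prodMk_right (𝕜 := ℝ) l a)
    have h' : fderiv ℝ (fun a' => F l a') a = _ := h.fderiv
    simp [pderivAff, h']
  simp only [Dmix, List.foldr, pderivLam, h1]
  have h := HasFDerivAt.comp (f := fun e : Fin χ → ℝ => (e, (0 : Fin χ → ℝ)))
    (0 : Fin χ → ℝ) (hd2 (0, 0)).hasFDerivAt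
    (hasFDerivAt_prodMk_left (𝕜 := ℝ) (0 : Fin χ → ℝ) (0 : Fin χ → ℝ))
  have h2 := h.clm_apply
    (hasFDerivAt_const ((0 : Fin χ → ℝ), (Pi.single j 1 : Fin χ → ℝ)) (0 : Fin χ → ℝ))
  have h' : fderiv ℝ (fun l' : Fin χ → ℝ =>
    fderiv ℝ (Function.uncurry F) (l', 0) (0, Pi.single j 1)) 0 = _ := h2.fderiv
  rw [h']
  simp [← Prod.zero_eq_mk]

/-- Onsager–Casimir reciprocity relations: `Q_{α,β}(B) = Q_{β,α}(−B)`. -/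
theorem onsager_casimir {χ : ℕ} (hχ : 1 ≤ χ)
    (f g : (Fin χ → ℝ) → (Fin χ → ℝ) → ℝ)
    (hf : ContDiff ℝ (⊤ : ℕ∞) (Function.uncurry f))
    (hg : ContDiff ℝ (⊤ : ℕ∞) (Function.uncurry g))
    (hFR : ∀ l A : Fin χ → ℝ, f l A = g (A - l) A)
    (hfnorm : ∀ A : Fin χ → ℝ, f 0 A = 0)
    (hgnorm : ∀ A : Fin χ → ℝ, g 0 A = 0)
    (α β : Fin χ) :
    Dmix [α] [β] f = Dmix [β] [α] g := by
  rw [Dmix_eq f hf, Dmix_eq g hg]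
  let V := Fin χ → ℝ
  let a : V := Pi.single α 1
  let b : V := Pi.single β 1
  let p1 := ContinuousLinearMap.fst ℝ V V
  let p2 := ContinuousLinearMap.snd ℝ V V
  have e1 := second_fderiv_comp (Function.uncurry g) hg ((p2 - p1).prod p2) (a, 0) (0, b)
  have e2 := second_fderiv_comp (Function.uncurry g) hg ((ContinuousLinearMap.id ℝ V).prod (ContinuousLinearMap.id ℝ V)) a b
  have e3 := second_fderiv_comp (Function.uncurry g) hg ((0 : V →L[ℝ] V).prod (ContinuousLinearMap.id ℝ V)) a b
  have hfe : (fun z : V × V => Function.uncurry g (((p2 - p1).prod p2) z))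
      = Function.uncurry f := by
    funext z
    exact (hFR z.1 z.2).symm
  have hz2 : (fun z : V => Function.uncurry g
      (((ContinuousLinearMap.id ℝ V).prod (ContinuousLinearMap.id ℝ V)) z))
      = fun _ => 0 := by
    funext z
    have := hFR 0 z
    rw [hfnorm, sub_zero] at this
    exact this.symm
  have hz3 : (fun z : V => Function.uncurry g
      (((0 : V →L[ℝ] V).prod (ContinuousLinearMap.id ℝ V)) z)) = fun _ => 0 := by
    funext z
    exact hgnorm z
  have hz0 : fderiv ℝ (fderiv ℝ (fun _ : V => (0 : ℝ))) 0 a b = 0 := by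
    simp
  rw [hfe] at e1
  rw [hz2, hz0] at e2
  rw [hz3, hz0] at e3
  have hsym : IsSymmSndFDerivAt ℝ (Function.uncurry g) 0 :=
    hg.contDiffAt.isSymmSndFDerivAt (by simp; exact WithTop.coe_le_coe.2 (le_top : (2 : ℕ∞) ≤ ⊤))
  have v1 : ((p2 - p1).prod p2) (a, 0) = -(a, (0 : V)) := by simp [p1, p2]
  have v2 : ((p2 - p1).prod p2) (0, b) = (b, (0 : V)) + ((0 : V), b) := by simp [p1, p2]
  have w (c : V) : ((ContinuousLinearMap.id ℝ V).prod (ContinuousLinearMap.id ℝ V)) c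
      = (c, (0 : V)) + ((0 : V), c) := by simp
  have w3 (c : V) : ((0 : V →L[ℝ] V).prod (ContinuousLinearMap.id ℝ V)) c
      = ((0 : V), c) := by simp
  rw [v1, v2] at e1
  rw [w, w] at e2
  rw [w3, w3] at e3
  have hs := hsym (b, 0) (0, a)
  simp only [map_add, map_neg, ContinuousLinearMap.add_apply,
    ContinuousLinearMap.neg_apply] at e1 e2
  change fderiv ℝ (fderiv ℝ (Function.uncurry f)) 0 (a, 0) (0, b)
    = fderiv ℝ (fderiv ℝ (Function.uncurry g)) 0 (b, 0) (0, a)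
  linarith
end

section
/- For all α, β, γ : Fin χ, the first response of the second cumulants satisfies D[(α, β); (γ)] f − D[(α, β); (γ)] g = − D[(α, β, γ); ∅] f; that is, the difference of the first response of the second cumulant at B and at −B equals minus the equilibrium third cumulant. -/
def revT {χ : ℕ} (F : (Fin χ → ℝ) → (Fin χ → ℝ) → ℝ) : (Fin χ → ℝ) → (Fin χ → ℝ) → ℝ :=
  fun l a => F (a - l) a

lemma smooth_pderivLam {χ : ℕ} (i : Fin χ) {F : (Fin χ → ℝ) → (Fin χ → ℝ) → ℝ}
    (hF : ContDiff ℝ (⊤ : ℕ∞) (Function.uncurry F)) :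
    ContDiff ℝ (⊤ : ℕ∞) (Function.uncurry (pderivLam i F)) := by
  have h : ContDiff ℝ (⊤ : ℕ∞) (fun p : (Fin χ → ℝ) × (Fin χ → ℝ) =>
      fderiv ℝ (fun l' => F l' p.2) p.1) := by
    refine ContDiff.fderiv (m := (⊤ : ℕ∞)) (n := (⊤ : ℕ∞))
      (f := fun (p : (Fin χ → ℝ) × (Fin χ → ℝ)) l' => F l' p.2) ?_ contDiff_fst (by simp)
    exact hF.comp (contDiff_snd.prodMk (contDiff_snd.comp contDiff_fst))
  exact h.clm_apply contDiff_const

lemma smooth_pderivAff {χ : ℕ} (i : Fin χ) {F : (Fin χ → ℝ) → (Fin χ → ℝ) → ℝ}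
    (hF : ContDiff ℝ (⊤ : ℕ∞) (Function.uncurry F)) :
    ContDiff ℝ (⊤ : ℕ∞) (Function.uncurry (pderivAff i F)) := by
  have h : ContDiff ℝ (⊤ : ℕ∞) (fun p : (Fin χ → ℝ) × (Fin χ → ℝ) =>
      fderiv ℝ (fun a' => F p.1 a') p.2) := by
    refine ContDiff.fderiv (m := (⊤ : ℕ∞)) (n := (⊤ : ℕ∞))
      (f := fun (p : (Fin χ → ℝ) × (Fin χ → ℝ)) a' => F p.1 a') ?_ contDiff_snd (by simp)
    exact hF.comp ((contDiff_fst.comp contDiff_fst).prodMk contDiff_snd)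
  exact h.clm_apply contDiff_const

lemma pderivLam_neg {χ : ℕ} (i : Fin χ) (F : (Fin χ → ℝ) → (Fin χ → ℝ) → ℝ) :
    pderivLam i (-F) = -pderivLam i F := by
  funext l a
  simp [pderivLam, fderiv_fun_neg]

lemma pderivLam_add {χ : ℕ} (i : Fin χ) {F G : (Fin χ → ℝ) → (Fin χ → ℝ) → ℝ}
    (hF : ContDiff ℝ (⊤ : ℕ∞) (Function.uncurry F))
    (hG : ContDiff ℝ (⊤ : ℕ∞) (Function.uncurry G)) :
    pderivLam i (F + G) = pderivLam i F + pderivLam i G := by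
  funext l a
  have h1 : DifferentiableAt ℝ (fun l' => F l' a) l :=
    ((hF.comp (contDiff_id.prodMk contDiff_const)).differentiable (by simp)) l
  have h2 : DifferentiableAt ℝ (fun l' => G l' a) l :=
    ((hG.comp (contDiff_id.prodMk contDiff_const)).differentiable (by simp)) l
  simp [pderivLam, fderiv_fun_add h1 h2]

lemma pderivLam_revT {χ : ℕ} (i : Fin χ) (F : (Fin χ → ℝ) → (Fin χ → ℝ) → ℝ) :
    pderivLam i (revT F) = -revT (pderivLam i F) := by
  funext l a
  simp only [pderivLam, revT, Pi.neg_apply]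
  have h1 := fderiv_comp_smul (𝕜 := ℝ) (f := fun y => F (a + y) a) (x := l) (-1)
  have h2 := fderiv_comp_add_left (𝕜 := ℝ) (f := fun y => F y a) (x := -l) a
  simp only [neg_smul, one_smul, ← sub_eq_add_neg] at h1 h2
  rw [h1, h2]
  simp

lemma pderivAff_revT {χ : ℕ} (i : Fin χ) {F : (Fin χ → ℝ) → (Fin χ → ℝ) → ℝ}
    (hF : ContDiff ℝ (⊤ : ℕ∞) (Function.uncurry F)) :
    pderivAff i (revT F) = revT (pderivLam i F + pderivAff i F) := by
  funext l a
  have hd := ((hF.differentiable (by simp)) (a - l, a)).hasFDerivAt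
  have e := hd.comp (f := fun a' => (a' - l, a')) a
    (((hasFDerivAt_id a).sub_const l).prodMk (hasFDerivAt_id a))
  have e1 := hd.comp (f := fun l' => (l', a)) (a - l)
    ((hasFDerivAt_id (a - l)).prodMk (hasFDerivAt_const a _))
  have e2 := hd.comp (f := fun a' => (a - l, a')) a
    ((hasFDerivAt_const (a - l) a).prodMk (hasFDerivAt_id a))
  have r := congrArg (fun L => L (Pi.single i (1 : ℝ))) e.fderiv
  have r1 := congrArg (fun L => L (Pi.single i (1 : ℝ))) e1.fderiv
  have r2 := congrArg (fun L => L (Pi.single i (1 : ℝ))) e2.fderiv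
  refine r.trans ((congrArg₂ (· + ·) r1 r2).trans ?_).symm
  simp [← map_add]

/-- `Q_{αβ,γ}(B) − Q_{αβ,γ}(−B) = − Q_{αβγ}(0; B)`. -/
theorem response_second_cumulant_from_third_cumulant {χ : ℕ} (hχ : 1 ≤ χ)
    (f g : (Fin χ → ℝ) → (Fin χ → ℝ) → ℝ)
    (hf : ContDiff ℝ (⊤ : ℕ∞) (Function.uncurry f))
    (hg : ContDiff ℝ (⊤ : ℕ∞) (Function.uncurry g))
    (hFR : ∀ l A : Fin χ → ℝ, f l A = g (A - l) A)
    (α β γ : Fin χ) :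
    Dmix [α, β] [γ] f - Dmix [α, β] [γ] g = - Dmix [α, β, γ] [] f := by
  have hfg : f = revT g := by
    funext l a
    exact hFR l a
  have h1 := smooth_pderivLam γ hg
  have h2 := smooth_pderivAff γ hg
  have key : Dmix [α, β] [γ] f = Dmix [α, β, γ] [] g + Dmix [α, β] [γ] g := by
    simp only [Dmix, List.foldr]
    rw [hfg, pderivAff_revT γ hg, pderivLam_revT, pderivLam_neg, pderivLam_revT,
      pderivLam_add β h1 h2,
      pderivLam_add α (smooth_pderivLam β h1) (smooth_pderivLam β h2)]
    simp [revT]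
  have key2 : Dmix [α, β, γ] [] f = - Dmix [α, β, γ] [] g := by
    simp only [Dmix, List.foldr]
    rw [hfg]
    simp only [pderivLam_revT, pderivLam_neg]
    simp [revT]
  rw [key, key2]
  ring
end

section
/- For all α, β, γ : Fin χ, the second response coefficients satisfy D[(α); (β, γ)] f + D[(α); (β, γ)] g = − D[(α, β); (γ)] f − D[(α, γ); (β)] g; that is, Q_{α,βγ}(B) + Q_{α,βγ}(−B) = − Q_{αβ,γ}(B) − Q_{αγ,β}(−B). -/
/-- Directional derivative of a function on a normed space. -/
noncomputable def dirD {E : Type*} [NormedAddCommGroup E] [NormedSpace ℝ E] (v : E)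
    (F : E → ℝ) : E → ℝ := fun p => fderiv ℝ F p v

section aux
variable {E : Type*} [NormedAddCommGroup E] [NormedSpace ℝ E]

theorem dirD_smooth (v : E) {F : E → ℝ} (hF : ContDiff ℝ (⊤ : ℕ∞) F) :
    ContDiff ℝ (⊤ : ℕ∞) (dirD v F) := by
  have h : ContDiff ℝ (⊤ : ℕ∞) (fderiv ℝ F) := hF.fderiv_right (by norm_cast)
  exact h.clm_apply contDiff_const

theorem smooth_diff {F : E → ℝ} (hF : ContDiff ℝ (⊤ : ℕ∞) F) : Differentiable ℝ F :=
  hF.differentiable (by norm_num)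

theorem dirD_add (v w : E) (F : E → ℝ) : dirD (v + w) F = dirD v F + dirD w F := by
  funext p; simp [dirD]

theorem dirD_neg (v : E) (F : E → ℝ) : dirD (-v) F = -dirD v F := by
  funext p; simp [dirD]

theorem dirD_fadd (v : E) {F G : E → ℝ} (hF : ContDiff ℝ (⊤ : ℕ∞) F)
    (hG : ContDiff ℝ (⊤ : ℕ∞) G) : dirD v (F + G) = dirD v F + dirD v G := by
  funext p
  simp [dirD, fderiv_add (smooth_diff hF p) (smooth_diff hG p)]

theorem dirD_fneg (v : E) (F : E → ℝ) : dirD v (-F) = -dirD v F := by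
  funext p
  simp [dirD, fderiv_neg]

theorem dirD_comp (T : E →L[ℝ] E) (v : E) {F : E → ℝ} (hF : ContDiff ℝ (⊤ : ℕ∞) F) :
    dirD v (F ∘ T) = dirD (T v) F ∘ T := by
  funext p
  simp only [dirD, Function.comp]
  have := ((smooth_diff hF (T p)).hasFDerivAt.comp p T.hasFDerivAt).fderiv
  rw [this]; rfl

theorem dirD_comm (v w : E) {F : E → ℝ} (hF : ContDiff ℝ (⊤ : ℕ∞) F) :
    dirD v (dirD w F) = dirD w (dirD v F) := by
  funext p
  have h : ContDiff ℝ (⊤ : ℕ∞) (fderiv ℝ F) := hF.fderiv_right (by norm_cast)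
  have hd : DifferentiableAt ℝ (fderiv ℝ F) p := h.differentiable (by norm_num) p
  have key : ∀ u u' : E, dirD u (dirD u' F) p = fderiv ℝ (fderiv ℝ F) p u u' := by
    intro u u'
    have := (hd.hasFDerivAt.clm_apply (hasFDerivAt_const u' p)).fderiv
    change fderiv ℝ (fun y => fderiv ℝ F y u') p u = _
    rw [this]; simp
  rw [key, key]
  exact second_derivative_symmetric (fun y => (smooth_diff hF y).hasFDerivAt)
    hd.hasFDerivAt v w

end aux

theorem uncurry_pderivLam {χ : ℕ} (i : Fin χ) (F : (Fin χ → ℝ) → (Fin χ → ℝ) → ℝ)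
    (hF : ContDiff ℝ (⊤ : ℕ∞) (Function.uncurry F)) :
    Function.uncurry (pderivLam i F) = dirD (Pi.single i 1, 0) (Function.uncurry F) := by
  funext ⟨l, a⟩
  have := ((smooth_diff hF (l, a)).hasFDerivAt.comp l (hasFDerivAt_prodMk_left (𝕜 := ℝ) l a)).fderiv
  have h2 : fderiv ℝ (fun l' => F l' a) l = _ := this
  simp only [Function.uncurry_apply_pair, pderivLam, dirD]
  rw [h2]; simp

theorem uncurry_pderivAff {χ : ℕ} (i : Fin χ) (F : (Fin χ → ℝ) → (Fin χ → ℝ) → ℝ)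
    (hF : ContDiff ℝ (⊤ : ℕ∞) (Function.uncurry F)) :
    Function.uncurry (pderivAff i F) = dirD (0, Pi.single i 1) (Function.uncurry F) := by
  funext ⟨l, a⟩
  have := ((smooth_diff hF (l, a)).hasFDerivAt.comp a (hasFDerivAt_prodMk_right (𝕜 := ℝ) l a)).fderiv
  have h2 : fderiv ℝ (fun a' => F l a') a = _ := this
  simp only [Function.uncurry_apply_pair, pderivAff, dirD]
  rw [h2]; simp

theorem Dmix_one_two {χ : ℕ} (i j k : Fin χ) (F : (Fin χ → ℝ) → (Fin χ → ℝ) → ℝ)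
    (hF : ContDiff ℝ (⊤ : ℕ∞) (Function.uncurry F)) :
    Dmix [i] [j, k] F = dirD (Pi.single i 1, 0) (dirD (0, Pi.single j 1)
      (dirD (0, Pi.single k 1) (Function.uncurry F))) 0 := by
  have e1 := uncurry_pderivAff k F hF
  have s1 := dirD_smooth (0, Pi.single k 1) hF
  rw [← e1] at s1
  have e2 := uncurry_pderivAff j _ s1
  have s2 := dirD_smooth (0, Pi.single j 1) s1
  rw [← e2] at s2
  have e3 := uncurry_pderivLam i _ s2
  rw [← e1, ← e2, ← e3]; rfl

theorem Dmix_two_one {χ : ℕ} (i j k : Fin χ) (F : (Fin χ → ℝ) → (Fin χ → ℝ) → ℝ)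
    (hF : ContDiff ℝ (⊤ : ℕ∞) (Function.uncurry F)) :
    Dmix [i, j] [k] F = dirD (Pi.single i 1, 0) (dirD (Pi.single j 1, 0)
      (dirD (0, Pi.single k 1) (Function.uncurry F))) 0 := by
  have e1 := uncurry_pderivAff k F hF
  have s1 := dirD_smooth (0, Pi.single k 1) hF
  rw [← e1] at s1
  have e2 := uncurry_pderivLam j _ s1
  have s2 := dirD_smooth (Pi.single j 1, 0) s1
  rw [← e2] at s2
  have e3 := uncurry_pderivLam i _ s2
  rw [← e1, ← e2, ← e3]; rfl

/-- `Q_{α,βγ}(B) + Q_{α,βγ}(−B) = − Q_{αβ,γ}(B) − Q_{αγ,β}(−B)`. -/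
theorem second_response_coefficients_relation {χ : ℕ} (hχ : 1 ≤ χ)
    (f g : (Fin χ → ℝ) → (Fin χ → ℝ) → ℝ)
    (hf : ContDiff ℝ (⊤ : ℕ∞) (Function.uncurry f))
    (hg : ContDiff ℝ (⊤ : ℕ∞) (Function.uncurry g))
    (hFR : ∀ l A : Fin χ → ℝ, f l A = g (A - l) A)
    (α β γ : Fin χ) :
    Dmix [α] [β, γ] f + Dmix [α] [β, γ] g =
      - Dmix [α, β] [γ] f - Dmix [α, γ] [β] g := by
  rw [Dmix_one_two _ _ _ f hf, Dmix_one_two _ _ _ g hg, Dmix_two_one _ _ _ f hf,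
    Dmix_two_one _ _ _ g hg]
  let T : ((Fin χ → ℝ) × (Fin χ → ℝ)) →L[ℝ] ((Fin χ → ℝ) × (Fin χ → ℝ)) :=
    ContinuousLinearMap.prod
      (ContinuousLinearMap.snd ℝ (Fin χ → ℝ) (Fin χ → ℝ) -
        ContinuousLinearMap.fst ℝ (Fin χ → ℝ) (Fin χ → ℝ))
      (ContinuousLinearMap.snd ℝ (Fin χ → ℝ) (Fin χ → ℝ))
  have hfg : Function.uncurry f = Function.uncurry g ∘ T := by
    funext ⟨l, a⟩
    exact hFR l a
  have hT1 : ∀ i : Fin χ, T (Pi.single i 1, 0) = -(Pi.single i 1, 0) := by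
    intro i; simp [T]
  have hT2 : ∀ i : Fin χ, T (0, Pi.single i 1) = (Pi.single i 1, 0) + (0, Pi.single i 1) := by
    intro i; simp [T]
  rw [hfg]
  generalize Function.uncurry g = G at hg
  rw [dirD_comp T _ hg, dirD_comp T _ (dirD_smooth _ hg),
    dirD_comp T _ (dirD_smooth _ (dirD_smooth _ hg)),
    dirD_comp T _ (dirD_smooth _ hg),
    dirD_comp T _ (dirD_smooth _ (dirD_smooth _ hg))]
  simp only [hT1, hT2, Function.comp, map_zero]
  generalize ((Pi.single α 1, 0) : (Fin χ → ℝ) × (Fin χ → ℝ)) = a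
  generalize ((Pi.single β 1, 0) : (Fin χ → ℝ) × (Fin χ → ℝ)) = b
  generalize ((Pi.single γ 1, 0) : (Fin χ → ℝ) × (Fin χ → ℝ)) = c
  generalize ((0, Pi.single β 1) : (Fin χ → ℝ) × (Fin χ → ℝ)) = b'
  generalize ((0, Pi.single γ 1) : (Fin χ → ℝ) × (Fin χ → ℝ)) = c'
  have S1 := fun v => dirD_smooth v hg
  have S2 := fun v w => dirD_smooth v (S1 w)
  have S3 : ∀ u v w z, ContDiff ℝ (⊤ : ℕ∞) (dirD u (dirD v G) + dirD w (dirD z G)) :=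
    fun u v w z => (S2 u v).add (S2 w z)
  have A1 : ∀ v, dirD v (dirD (c + c') G) = dirD v (dirD c G) + dirD v (dirD c' G) := by
    intro v; rw [dirD_add, dirD_fadd v (S1 c) (S1 c')]
  rw [dirD_add b b', dirD_neg, dirD_neg, dirD_neg, A1 b, A1 b', dirD_fneg,
    dirD_fadd a (S3 _ _ _ _) (S3 _ _ _ _),
    dirD_fadd a (S2 _ _) (S2 _ _), dirD_fadd a (S2 _ _) (S2 _ _), dirD_comm b' c hg]
  simp only [Pi.add_apply, Pi.neg_apply]
  ring
end

section
/- (Theorem 1, antisymmetric relations.) If Q satisfies the even-m relations, i.e. for every S ⊆ Fin N with |S| even one has Q(S) = −(1/2) · Σ_{T ⊆ Sᶜ, T ≠ ∅} Q(S ∪ T), then Q also satisfies the odd-m relations: for every S ⊆ Fin N with |S| odd, Σ_{T ⊆ Sᶜ, T ≠ ∅} Q(S ∪ T) = 0. -/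
/-- Alternating sum over the interval between `S` and `V`. -/
lemma alt_interval {α : Type*} [Fintype α] [DecidableEq α] (S V : Finset α) :
    ∑ U ∈ (Finset.univ : Finset (Finset α)) with S ⊆ U ∧ U ⊆ V, (-1 : ℝ) ^ U.card
      = if V = S then (-1 : ℝ) ^ S.card else 0 := by
  by_cases hSV : S ⊆ V
  · have h1 : ∑ U ∈ (Finset.univ : Finset (Finset α)) with S ⊆ U ∧ U ⊆ V, (-1 : ℝ) ^ U.card
        = ∑ T ∈ (V \ S).powerset, (-1 : ℝ) ^ S.card * (-1 : ℝ) ^ T.card := by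
      refine Finset.sum_bij' (fun U _ => U \ S) (fun T _ => S ∪ T) ?_ ?_ ?_ ?_ ?_
      · intro U hU
        simp only [Finset.mem_filter, Finset.mem_univ, true_and] at hU
        exact Finset.mem_powerset.2 (Finset.sdiff_subset_sdiff hU.2 le_rfl)
      · intro T hT
        have hT := Finset.mem_powerset.1 hT
        simp only [Finset.mem_filter, Finset.mem_univ, true_and]
        exact ⟨Finset.subset_union_left,
          Finset.union_subset hSV (hT.trans Finset.sdiff_subset)⟩
      · intro U hU
        simp only [Finset.mem_filter, Finset.mem_univ, true_and] at hU
        exact Finset.union_sdiff_of_subset hU.1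
      · intro T hT
        have hT := Finset.mem_powerset.1 hT
        ext x
        have := @hT x
        simp only [Finset.mem_sdiff, Finset.mem_union] at *
        tauto
      · intro U hU
        simp only [Finset.mem_filter, Finset.mem_univ, true_and] at hU
        rw [← pow_add, add_comm, Finset.card_sdiff_add_card_eq_card hU.1]
    have h2 := Finset.sum_powerset_neg_one_pow_card (x := V \ S)
    have h3 : ∑ T ∈ (V \ S).powerset, (-1 : ℝ) ^ T.card = if V \ S = ∅ then 1 else 0 := by
      exact_mod_cast congrArg (Int.cast : ℤ → ℝ) h2
    rw [h1, ← Finset.mul_sum, h3]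
    have h4 : V \ S = ∅ ↔ V = S := by
      rw [Finset.sdiff_eq_empty_iff_subset]
      exact ⟨fun h => h.antisymm hSV, fun h => h.le⟩
    simp only [h4, mul_ite, mul_one, mul_zero]
  · rw [if_neg (by rintro rfl; exact hSV le_rfl)]
    apply Finset.sum_eq_zero
    intro U hU
    simp only [Finset.mem_filter, Finset.mem_univ, true_and] at hU
    exact absurd (hU.1.trans hU.2) hSV

/-- Möbius inversion for superset sums. -/
lemma moebius_sup {α : Type*} [Fintype α] [DecidableEq α] (Q : Finset α → ℝ) (S : Finset α) :
    ∑ U ∈ (Finset.univ : Finset (Finset α)) with S ⊆ U,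
      (-1 : ℝ) ^ U.card * ∑ V ∈ (Finset.univ : Finset (Finset α)) with U ⊆ V, Q V
      = (-1 : ℝ) ^ S.card * Q S := by
  have : ∀ V : Finset α, (∑ U ∈ (Finset.univ : Finset (Finset α)) with S ⊆ U ∧ U ⊆ V,
      (-1 : ℝ) ^ U.card) * Q V = if V = S then (-1 : ℝ) ^ S.card * Q S else 0 := by
    intro V
    rw [alt_interval]
    split_ifs with h
    · rw [h]
    · simp
  calc _ = ∑ V : Finset α, (∑ U ∈ (Finset.univ : Finset (Finset α)) with S ⊆ U ∧ U ⊆ V,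
      (-1 : ℝ) ^ U.card) * Q V := by
        simp only [Finset.sum_filter, Finset.mul_sum, Finset.sum_mul]
        have : ∀ U : Finset α, (if S ⊆ U then ∑ V : Finset α, (-1 : ℝ) ^ U.card *
            (if U ⊆ V then Q V else 0) else 0) = ∑ V : Finset α,
            (if S ⊆ U ∧ U ⊆ V then (-1 : ℝ) ^ U.card else 0) * Q V := by
          intro U
          by_cases h : S ⊆ U <;> simp [h]
        rw [Finset.sum_comm]
        exact Finset.sum_congr rfl fun U _ => this U
    _ = _ := by simp [this]

lemma sum_superset {α : Type*} [Fintype α] [DecidableEq α] (Q : Finset α → ℝ) (S : Finset α) :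
    ∑ T ∈ Sᶜ.powerset.filter (· ≠ ∅), Q (S ∪ T)
      = ∑ U ∈ (Finset.univ : Finset (Finset α)) with S ⊂ U, Q U := by
  refine Finset.sum_bij' (fun T _ => S ∪ T) (fun U _ => U \ S) ?_ ?_ ?_ ?_ ?_
  · intro T hT
    simp only [Finset.mem_filter, Finset.mem_powerset, Finset.mem_univ, true_and] at *
    refine Finset.ssubset_iff_subset_ne.2 ⟨Finset.subset_union_left, fun h => hT.2 ?_⟩
    have h1 : T ⊆ S := Finset.union_eq_left.1 h.symm
    ext x
    have := @h1 x
    have := @hT.1 x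
    simp only [Finset.mem_compl, Finset.notMem_empty] at *
    tauto
  · intro U hU
    simp only [Finset.mem_filter, Finset.mem_powerset, Finset.mem_univ, true_and] at *
    refine ⟨fun x hx => by simp at hx ⊢; exact hx.2, fun h => ?_⟩
    exact hU.2 (Finset.sdiff_eq_empty_iff_subset.1 h)
  · intro T hT
    simp only [Finset.mem_filter, Finset.mem_powerset] at hT
    ext x
    have := @hT.1 x
    simp only [Finset.mem_compl, Finset.mem_sdiff, Finset.mem_union] at *
    tauto
  · intro U hU
    simp only [Finset.mem_filter, Finset.mem_univ, true_and] at hU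
    exact Finset.union_sdiff_of_subset hU.1
  · intros; rfl

lemma sum_split {α : Type*} [Fintype α] [DecidableEq α] (Q : Finset α → ℝ) (S : Finset α) :
    ∑ U ∈ (Finset.univ : Finset (Finset α)) with S ⊆ U, Q U
      = Q S + ∑ U ∈ (Finset.univ : Finset (Finset α)) with S ⊂ U, Q U := by
  rw [← Finset.sum_insert (by simp)]
  congr 1
  ext U
  simp only [Finset.mem_filter, Finset.mem_univ, true_and, Finset.mem_insert]
  rw [subset_iff_ssubset_or_eq, or_comm, eq_comm]

/-- (Theorem 1, antisymmetric relations.) If `Q` satisfies the even-`m` relations,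
then it also satisfies the odd-`m` relations. -/
theorem odd_relations_from_even_relations (N : ℕ) (hN : 1 ≤ N)
    (Q : Finset (Fin N) → ℝ)
    (h : ∀ S : Finset (Fin N), Even S.card →
      Q S = -(1 / 2) * ∑ T ∈ Sᶜ.powerset.filter (· ≠ ∅), Q (S ∪ T)) :
    ∀ S : Finset (Fin N), Odd S.card →
      ∑ T ∈ Sᶜ.powerset.filter (· ≠ ∅), Q (S ∪ T) = 0 := by
  simp only [sum_superset] at h ⊢
  obtain ⟨G, hG⟩ : ∃ G : Finset (Fin N) → ℝ, ∀ S, G S =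
      (∑ U ∈ (Finset.univ : Finset (Finset (Fin N))) with S ⊆ U, Q U)
        + (-1 : ℝ) ^ S.card * Q S := ⟨_, fun _ => rfl⟩
  have key : ∀ S, ∑ U ∈ (Finset.univ : Finset (Finset (Fin N))) with S ⊆ U,
      (-1 : ℝ) ^ U.card * G U = G S := by
    intro S
    have hs : ∀ n : ℕ, (-1 : ℝ) ^ n * (-1 : ℝ) ^ n = 1 := fun n => by
      rw [← mul_pow]; simp
    simp only [hG, mul_add, Finset.sum_add_distrib, moebius_sup, ← mul_assoc, hs, one_mul]
    ring
  have zero : ∀ S, G S = 0 := by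
    intro S
    induction S using WellFoundedGT.induction with
    | ind S ih =>
      rcases Nat.even_or_odd S.card with he | ho
      · have := h S he
        rw [hG, sum_split, he.neg_one_pow]
        linarith
      · have k := key S
        rw [sum_split, Finset.sum_eq_zero, ho.neg_one_pow] at k
        · linarith
        · intro U hU
          rw [ih U (by simpa using hU), mul_zero]
  intro S ho
  have := zero S
  rw [hG, sum_split, ho.neg_one_pow] at this
  linarith
end

section
/- (Corollary, independence of the even-m antisymmetric relations.) For every N ≥ 1 and every even M with 2 ≤ M ≤ N, there exist a function Q : Finset (Fin N) → ℝ and a subset S₀ ⊆ Fin N with |S₀| = M such that the even-m relation Q(S) = −(1/2) · Σ_{T ⊆ Sᶜ, T ≠ ∅} Q(S ∪ T) holds for every S ⊆ Fin N with |S| even and |S| > M, but fails at S₀, i.e. Q(S₀) ≠ −(1/2) · Σ_{T ⊆ S₀ᶜ, T ≠ ∅} Q(S₀ ∪ T). In other words, the relation at an even index M cannot be deduced from the relations at all even indices larger than M. -/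
/-- (Corollary, independence of the even-`m` antisymmetric relations.) The even-`m`
relation at an even index `M` cannot be deduced from the relations at all even
indices larger than `M`. -/
theorem even_relations_independent (N M : ℕ) (hN : 1 ≤ N)
    (hM : Even M) (hM2 : 2 ≤ M) (hMN : M ≤ N) :
    ∃ (Q : Finset (Fin N) → ℝ) (S₀ : Finset (Fin N)),
      S₀.card = M ∧
      (∀ S : Finset (Fin N), Even S.card → M < S.card →
        Q S = -(1 / 2) * ∑ T ∈ Sᶜ.powerset.filter (· ≠ ∅), Q (S ∪ T)) ∧
      Q S₀ ≠ -(1 / 2) * ∑ T ∈ S₀ᶜ.powerset.filter (· ≠ ∅), Q (S₀ ∪ T) := by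
  obtain ⟨S₀, hS₀⟩ : ∃ S : Finset (Fin N), S.card = M := by
    obtain ⟨S, -, h⟩ := Finset.exists_subset_card_eq
      (s := (Finset.univ : Finset (Fin N))) (n := M) (by simpa using hMN)
    exact ⟨S, h⟩
  refine ⟨fun S => if S.card = M then 1 else 0, S₀, hS₀, ?_, ?_⟩
  · intro S _ hS
    rw [Finset.sum_eq_zero]
    · simp [hS.ne']
    · intro T _
      have h := Finset.card_le_card (Finset.subset_union_left (s₁ := S) (s₂ := T))
      exact if_neg (by omega)
  · rw [Finset.sum_eq_zero]
    · simp [hS₀]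
    · intro T hT
      rw [Finset.mem_filter, Finset.mem_powerset] at hT
      have hd : Disjoint S₀ T :=
        Disjoint.mono_right hT.1 disjoint_compl_right
      have hc := Finset.card_union_of_disjoint hd
      have hp := Finset.card_pos.mpr (Finset.nonempty_iff_ne_empty.mpr hT.2)
      exact if_neg (by omega)
end

section
/- (Theorem 2, antisymmetric Euler-coefficient formula.) If Q satisfies the even-m relations, i.e. for every S ⊆ Fin N with |S| even one has Q(S) = −(1/2) · Σ_{T ⊆ Sᶜ, T ≠ ∅} Q(S ∪ T), then for every S ⊆ Fin N with |S| even and Sᶜ ≠ ∅ one has the linear combination Q(S) = Σ_{T ⊆ Sᶜ, |T| odd} e₀(|T|) · Q(S ∪ T), where the sum runs over all nonempty subsets T of Sᶜ of odd cardinality. -/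
/-- The constant term `E_k(0)` of the `k`-th Euler polynomial, for odd `k`,
expressed via Bernoulli numbers: `e₀(k) = 2 (1 − 2^(k+1)) B_{k+1} / (k+1)`. -/
noncomputable def eulerConst (k : ℕ) : ℚ :=
  2 * (1 - 2 ^ (k + 1)) * bernoulli (k + 1) / (k + 1)

open PowerSeries in
lemma eulerConst_series_mul :
    (PowerSeries.mk fun k => eulerConst k / (k.factorial : ℚ)) * (exp ℚ + 1) = 2 := by
  set E : PowerSeries ℚ := PowerSeries.mk fun k => eulerConst k / (k.factorial : ℚ) with hE
  have hB := bernoulliPowerSeries_mul_exp_sub_one ℚ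
  set B := bernoulliPowerSeries ℚ with hBdef
  have hXE : X * E = 2 * (B - rescale 2 B) := by
    ext n
    have h2 : (2 : PowerSeries ℚ) = C (2 : ℚ) := (map_ofNat C 2).symm
    rw [h2, coeff_C_mul]
    cases n with
    | zero =>
      rw [map_sub, coeff_rescale]
      simp
    | succ n =>
      rw [coeff_succ_X_mul]
      simp only [hE, hBdef, bernoulliPowerSeries, coeff_mk, map_sub, coeff_rescale, eulerConst,
        Nat.factorial_succ]
      have : (n.factorial : ℚ) ≠ 0 := by exact_mod_cast n.factorial_ne_zero
      have h1 : (n + 1 : ℚ) ≠ 0 := by positivity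
      simp
      field_simp
  have hB2 : rescale 2 B * (exp ℚ ^ 2 - 1) = 2 * X := by
    have := congrArg (rescale (2 : ℚ)) hB
    rw [map_mul, map_sub, map_one, rescale_X] at this
    rw [exp_pow_eq_rescale_exp]
    have h2 : (2 : PowerSeries ℚ) = C (2 : ℚ) := (map_ofNat C 2).symm
    rw [h2]
    simpa using this
  have hexp : (exp ℚ - 1) ≠ 0 := by
    intro h0
    rw [h0, mul_zero] at hB
    exact X_ne_zero hB.symm
  have hX : (X : PowerSeries ℚ) ≠ 0 := X_ne_zero
  apply mul_left_cancel₀ (mul_ne_zero hX hexp)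
  linear_combination (exp ℚ ^ 2 - 1) * hXE + 2 * (exp ℚ + 1) * hB - 2 * hB2

lemma eulerConst_rec (n : ℕ) :
    ∑ k ∈ Finset.range (n + 1), (n.choose k : ℚ) * eulerConst k + eulerConst n
      = if n = 0 then 2 else 0 := by
  have h := congrArg (PowerSeries.coeff n) eulerConst_series_mul
  have h2 : (2 : PowerSeries ℚ) = PowerSeries.C (2 : ℚ) :=
    (map_ofNat PowerSeries.C 2).symm
  rw [mul_add, mul_one, map_add, PowerSeries.coeff_mul, h2, PowerSeries.coeff_C,
    Finset.Nat.sum_antidiagonal_eq_sum_range_succ_mk] at h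
  simp only [PowerSeries.coeff_mk, PowerSeries.coeff_exp] at h
  have hf : (n.factorial : ℚ) ≠ 0 := by exact_mod_cast n.factorial_ne_zero
  have h3 := congrArg (fun x => (n.factorial : ℚ) * x) h
  simp only [mul_add, Finset.mul_sum] at h3
  have e1 : (n.factorial : ℚ) * (eulerConst n / n.factorial) = eulerConst n := by field_simp
  rw [e1] at h3
  have e2 : ((n.factorial : ℚ) * if n = 0 then 2 else 0) = if n = 0 then 2 else 0 := by
    split_ifs with h0
    · simp [h0]
    · simp
  rw [e2] at h3
  rw [← h3]
  congr 1
  apply Finset.sum_congr rfl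
  intro k hk
  have hk' : k ≤ n := by simpa [Nat.lt_succ_iff] using hk
  rw [Nat.cast_choose ℚ hk']
  have a1 : (k.factorial : ℚ) ≠ 0 := by exact_mod_cast k.factorial_ne_zero
  have a2 : ((n - k).factorial : ℚ) ≠ 0 := by exact_mod_cast (n - k).factorial_ne_zero
  simp
  field_simp

lemma eulerConst_zero : eulerConst 0 = 1 := by
  norm_num [eulerConst, bernoulli_one]

lemma eulerConst_even (n : ℕ) (hn : Even n) (h0 : n ≠ 0) : eulerConst n = 0 := by
  rw [eulerConst, bernoulli_eq_zero_of_odd hn.add_one (by omega)]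
  simp

lemma eulerConst_rec' (n : ℕ) :
    ∑ k ∈ Finset.range (n + 1), (n.choose k : ℚ) * eulerConst (k + 1) + eulerConst (n + 1)
      = eulerConst n - if n = 0 then 2 else 0 := by
  have h1 := eulerConst_rec (n + 1)
  have h0 := eulerConst_rec n
  rw [Finset.sum_range_succ'] at h1
  simp only [Nat.choose_succ_succ, Nat.cast_add, add_mul, Finset.sum_add_distrib] at h1
  have h2 : ∑ k ∈ Finset.range (n + 1), (n.choose (k + 1) : ℚ) * eulerConst (k + 1)
      + eulerConst 0 = ∑ k ∈ Finset.range (n + 1), (n.choose k : ℚ) * eulerConst k := by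
    rw [Finset.sum_range_succ' (fun k => (n.choose k : ℚ) * eulerConst k),
      Finset.sum_range_succ]
    simp
  simp at h1 h2
  linarith

lemma shift_sum {N : ℕ} (Q : Finset (Fin N) → ℝ) (S U : Finset (Fin N)) (hU : U ⊆ Sᶜ) :
    ∑ T ∈ (S ∪ U)ᶜ.powerset, Q (S ∪ U ∪ T)
      = ∑ T ∈ Sᶜ.powerset.filter (fun T => U ⊆ T), Q (S ∪ T) := by
  refine Finset.sum_bij' (fun T _ => U ∪ T) (fun T _ => T \ U) ?_ ?_ ?_ ?_ ?_
  · intro T hT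
    simp only [Finset.mem_powerset, Finset.mem_filter, Finset.subset_iff, Finset.mem_compl,
      Finset.mem_union] at *
    grind
  · intro T hT
    simp only [Finset.mem_powerset, Finset.mem_filter, Finset.subset_iff, Finset.mem_compl,
      Finset.mem_union, Finset.mem_sdiff] at *
    grind
  · intro T hT
    ext x
    simp only [Finset.mem_powerset, Finset.subset_iff, Finset.mem_compl,
      Finset.mem_union, Finset.mem_sdiff] at *
    grind
  · intro T hT
    simp only [Finset.mem_filter] at hT
    exact Finset.union_sdiff_of_subset hT.2
  · intro T hT
    rw [Finset.union_assoc]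

/-- (Theorem 2, antisymmetric Euler-coefficient formula.) If `Q` satisfies the
even-`m` relations, then every even-`|S|` quantity is the linear combination of
the odd ones with Euler-polynomial constant terms as coefficients. -/
theorem even_from_odd_euler_coefficients (N : ℕ) (hN : 1 ≤ N)
    (Q : Finset (Fin N) → ℝ)
    (h : ∀ S : Finset (Fin N), Even S.card →
      Q S = -(1 / 2) * ∑ T ∈ Sᶜ.powerset.filter (· ≠ ∅), Q (S ∪ T)) :
    ∀ S : Finset (Fin N), Even S.card → Sᶜ ≠ ∅ →
      Q S = ∑ T ∈ Sᶜ.powerset.filter (fun T => Odd T.card),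
        (eulerConst T.card : ℝ) * Q (S ∪ T) := by
  intro S hS _
  have hF : ∀ S : Finset (Fin N), Even S.card → Q S + ∑ T ∈ Sᶜ.powerset, Q (S ∪ T) = 0 := by
    intro S hS
    have h1 := h S hS
    have h2 := Finset.sum_filter_add_sum_filter_not Sᶜ.powerset (fun T => T ≠ ∅)
      (fun T => Q (S ∪ T))
    have h3 : Sᶜ.powerset.filter (fun T => ¬ T ≠ ∅) = {∅} := by
      ext T
      simp only [Finset.mem_filter, Finset.mem_powerset, Finset.mem_singleton, not_not]
      exact ⟨fun h => h.2, fun h => ⟨by simp [h], h⟩⟩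
    rw [h3] at h2
    simp only [Finset.sum_singleton, Finset.union_empty] at h2
    linarith
  have key : ∑ U ∈ Sᶜ.powerset, (eulerConst (U.card + 1) : ℝ) *
      (Q (S ∪ U) + ∑ T ∈ Sᶜ.powerset.filter (fun T => U ⊆ T), Q (S ∪ T)) = 0 := by
    apply Finset.sum_eq_zero
    intro U hU
    have hU' := Finset.mem_powerset.mp hU
    rcases Nat.even_or_odd U.card with he | ho
    · have hd : Disjoint S U := by
        rw [Finset.disjoint_right]
        intro x hx
        exact Finset.mem_compl.mp (hU' hx)
      rw [← shift_sum Q S U hU', hF _ (by rw [Finset.card_union_of_disjoint hd]; exact hS.add he),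
        mul_zero]
    · rw [eulerConst_even _ ho.add_one (by omega)]
      simp
  simp only [mul_add, Finset.sum_add_distrib, Finset.mul_sum] at key
  rw [Finset.sum_comm' (t' := Sᶜ.powerset) (s' := fun T => T.powerset)
    (by
      intro U T
      simp only [Finset.mem_powerset, Finset.mem_filter]
      exact ⟨fun ⟨_, b, c⟩ => ⟨c, b⟩, fun ⟨c, b⟩ => ⟨c.trans b, b, c⟩⟩),
    ← Finset.sum_add_distrib] at key
  have key2 : ∑ T ∈ Sᶜ.powerset,
      ((eulerConst T.card : ℝ) - if T = ∅ then 2 else 0) * Q (S ∪ T) = 0 := by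
    refine Eq.trans ?_ key
    apply Finset.sum_congr rfl
    intro T _
    rw [← Finset.sum_mul, ← add_mul,
      Finset.sum_powerset_apply_card (fun k => (eulerConst (k + 1) : ℝ))]
    congr 1
    have := congrArg (fun q : ℚ => (q : ℝ)) (eulerConst_rec' T.card)
    simp only [Finset.card_eq_zero] at this
    push_cast at this
    simp only [nsmul_eq_mul]
    rw [add_comm, this]
    split_ifs <;> simp
  rw [Finset.sum_filter]
  have key3 : ∑ T ∈ Sᶜ.powerset, ((if Odd T.card then (eulerConst T.card : ℝ) * Q (S ∪ T) else 0)
      - if T = ∅ then Q S else 0) = 0 := by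
    refine Eq.trans ?_ key2
    apply Finset.sum_congr rfl
    intro T _
    by_cases hT : T = ∅
    · subst hT
      simp [eulerConst_zero]
      ring
    · rcases Nat.even_or_odd T.card with he | ho
      · rw [eulerConst_even _ he (by simpa using hT)]
        simp [hT]
      · simp [hT, ho]
  rw [Finset.sum_sub_distrib, Finset.sum_ite_eq' ] at key3
  simp at key3
  linarith
end

section
/- (Proposition, expression of the even partial sums.) Suppose Q satisfies the even-m relations, i.e. for every S ⊆ Fin N with |S| even one has Q(S) = −(1/2) · Σ_{T ⊆ Sᶜ, T ≠ ∅} Q(S ∪ T). Define rational coefficients γ_j^{(2l)} by γ_j^{(0)} := 0 for all j and the recurrence γ_j^{(2l)} := −(1/2)·(γ_{2l−1}^{(2l−2)} + 1)·C(j, 2l−1) + γ_j^{(2l−2)}, where C(j, q) is the binomial coefficient. Then for every S ⊆ Fin N with |S| odd, say |S| = 2K+1, and every integer l with 1 ≤ l ≤ ⌊(N−1)/2⌋ − K, the partial sum S_{2l} := Σ_{j=1}^{2l} Q⁽ʲ⁾(S) satisfies S_{2l} = Σ_{j=2l+1}^{N−|S|} γ_j^{(2l)} · Q⁽ʲ⁾(S).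 -/
/-- The coefficients `γ_j^{(2l)}`: `gam l j = γ_j^{(2l)}`, defined by
`γ_j^{(0)} = 0` and the recurrence
`γ_j^{(2l)} = −(1/2)(γ_{2l−1}^{(2l−2)} + 1) C(j, 2l−1) + γ_j^{(2l−2)}`. -/
def gam : ℕ → ℕ → ℚ
  | 0, _ => 0
  | l + 1, j => -(1 / 2) * (gam l (2 * l + 1) + 1) * (j.choose (2 * l + 1) : ℚ) + gam l j

/-- The coefficients of the series `-tanh (x/2)` (times factorials). -/
def dco (n : ℕ) : ℚ := if n % 2 = 1 then -(1 / 2) * (gam (n / 2) n + 1) else 0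

theorem dco_even (k : ℕ) : dco (2 * k) = 0 := by
  simp [dco]

theorem dco_odd (k : ℕ) : dco (2 * k + 1) = -(1 / 2) * (gam k (2 * k + 1) + 1) := by
  have h1 : (2 * k + 1) % 2 = 1 := by omega
  have h2 : (2 * k + 1) / 2 = k := by omega
  simp [dco, h1, h2]

theorem gam_eq_sum (l j : ℕ) :
    gam l j = ∑ i ∈ Finset.range (2 * l), dco i * (j.choose i : ℚ) := by
  induction l with
  | zero => simp [gam]
  | succ l ih =>
    rw [show 2 * (l + 1) = 2 * l + 1 + 1 by ring, Finset.sum_range_succ, Finset.sum_range_succ,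
      ← ih, dco_even, dco_odd, gam]
    ring

/-- Exponential generating series of `dco`. -/
noncomputable def cser : PowerSeries ℚ := PowerSeries.mk fun n => dco n / (n.factorial : ℚ)

noncomputable def gser : PowerSeries ℚ :=
  cser + cser * PowerSeries.exp ℚ + PowerSeries.exp ℚ - 1

theorem coeff_gser (n : ℕ) (hn : n ≠ 0) :
    PowerSeries.coeff n gser * (n.factorial : ℚ) =
      dco n + ∑ i ∈ Finset.range (n + 1), dco i * (n.choose i : ℚ) + 1 := by
  have hf : (n.factorial : ℚ) ≠ 0 := by exact_mod_cast n.factorial_ne_zero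
  have h1 : PowerSeries.coeff n (cser * PowerSeries.exp ℚ) * (n.factorial : ℚ) =
      ∑ i ∈ Finset.range (n + 1), dco i * (n.choose i : ℚ) := by
    rw [PowerSeries.coeff_mul, Finset.Nat.sum_antidiagonal_eq_sum_range_succ_mk, Finset.sum_mul]
    refine Finset.sum_congr rfl fun i hi => ?_
    have hi' : i ≤ n := by simpa [Nat.lt_succ_iff] using hi
    rw [Nat.cast_choose ℚ hi']
    simp [cser, PowerSeries.coeff_exp]
    ring
  have h2 : PowerSeries.coeff n cser * (n.factorial : ℚ) = dco n := by
    simp [cser]; field_simp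
  have h3 : PowerSeries.coeff n (PowerSeries.exp ℚ) * (n.factorial : ℚ) = 1 := by
    simp [PowerSeries.coeff_exp]; field_simp
  rw [gser, map_sub, map_add, map_add, PowerSeries.coeff_one, if_neg hn, sub_zero, add_mul,
    add_mul, h1, h2, h3]

theorem coeff_gser_odd (k : ℕ) : PowerSeries.coeff (2 * k + 1) gser = 0 := by
  have h := coeff_gser (2 * k + 1) (by omega)
  rw [Finset.sum_range_succ, Finset.sum_range_succ, ← gam_eq_sum, dco_even, dco_odd] at h
  have hf : ((2 * k + 1).factorial : ℚ) ≠ 0 := by exact_mod_cast Nat.factorial_ne_zero _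
  have : PowerSeries.coeff (2 * k + 1) gser * ((2 * k + 1).factorial : ℚ) = 0 := by
    rw [h, Nat.choose_self]; push_cast; ring
  exact (mul_eq_zero.mp this).resolve_right hf

theorem evalNeg_cser : PowerSeries.evalNegHom cser = -cser := by
  ext n
  simp only [PowerSeries.evalNegHom, PowerSeries.coeff_rescale, map_neg, cser,
    PowerSeries.coeff_mk]
  rcases Nat.even_or_odd' n with ⟨k, rfl | rfl⟩
  · simp [dco_even]
  · simp [pow_succ, pow_mul]

theorem evalNeg_gser : PowerSeries.evalNegHom gser = gser := by
  ext n
  simp only [PowerSeries.evalNegHom, PowerSeries.coeff_rescale]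
  rcases Nat.even_or_odd' n with ⟨k, rfl | rfl⟩
  · simp [pow_mul]
  · simp [coeff_gser_odd]

theorem gser_eq_zero : gser = 0 := by
  have h1 : PowerSeries.evalNegHom gser =
      -cser + -cser * PowerSeries.evalNegHom (PowerSeries.exp ℚ)
        + PowerSeries.evalNegHom (PowerSeries.exp ℚ) - 1 := by
    conv_lhs => rw [gser]
    rw [map_sub, map_add, map_add, map_mul, evalNeg_cser, map_one]
  rw [evalNeg_gser] at h1
  have h2 := PowerSeries.exp_mul_exp_neg_eq_one (A := ℚ)
  have h3 : gser = cser + cser * PowerSeries.exp ℚ + PowerSeries.exp ℚ - 1 := rfl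
  have h4 : (PowerSeries.exp ℚ + 1) * gser = 0 := by
    linear_combination PowerSeries.exp ℚ * h1 + (1 - cser) * h2 + h3
  refine (mul_eq_zero.mp h4).resolve_left fun h5 => ?_
  have h6 := congrArg (PowerSeries.coeff 0) h5
  simp [PowerSeries.coeff_exp] at h6

theorem gam_diag (l : ℕ) : gam (l + 1) (2 * l + 2) = -1 := by
  have h := coeff_gser (2 * (l + 1)) (by omega)
  rw [Finset.sum_range_succ, ← gam_eq_sum, dco_even, gser_eq_zero] at h
  simp only [map_zero, zero_mul, zero_add, add_zero] at h
  rw [show 2 * l + 2 = 2 * (l + 1) by ring]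
  linarith

theorem level_relation (N : ℕ) (Q : Finset (Fin N) → ℝ)
    (h : ∀ S : Finset (Fin N), Even S.card →
      Q S = -(1 / 2) * ∑ T ∈ Sᶜ.powerset.filter (· ≠ ∅), Q (S ∪ T))
    (S : Finset (Fin N)) (j : ℕ) (hj : Even (S.card + j)) :
    ∑ T ∈ Sᶜ.powersetCard j, Q (S ∪ T) =
      -(1 / 2) * ∑ i ∈ Finset.Icc (j + 1) (N - S.card),
        (i.choose j : ℝ) * ∑ T ∈ Sᶜ.powersetCard i, Q (S ∪ T) := by
  have hT : ∀ T ∈ Sᶜ.powersetCard j, Q (S ∪ T) =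
      -(1 / 2) * ∑ V ∈ Sᶜ.powerset with T ⊂ V, Q (S ∪ V) := by
    intro T hT
    rw [Finset.mem_powersetCard] at hT
    have hd : Disjoint S T := by
      rw [Finset.disjoint_left]; intro x hx hx'
      exact (Finset.mem_compl.mp (hT.1 hx')) hx
    rw [h (S ∪ T) (by rw [Finset.card_union_of_disjoint hd, hT.2]; exact hj)]
    congr 1
    refine Finset.sum_bij' (fun U _ => T ∪ U) (fun V _ => V \ T) ?_ ?_ ?_ ?_ ?_
    · intro U hU
      simp only [Finset.mem_filter, Finset.mem_powerset] at hU ⊢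
      obtain ⟨hU1, hU2⟩ := hU
      refine ⟨Finset.union_subset hT.1 (hU1.trans (by simp)), ?_⟩
      rw [Finset.ssubset_iff_subset_ne]
      refine ⟨Finset.subset_union_left, fun he => ?_⟩
      obtain ⟨x, hx⟩ := Finset.nonempty_iff_ne_empty.mpr hU2
      have h1 := hU1 hx
      have h2 : x ∈ T := by rw [he]; exact Finset.mem_union_right _ hx
      simp [h2] at h1
    · intro V hV
      simp only [Finset.mem_filter, Finset.mem_powerset] at hV ⊢
      refine ⟨?_, ?_⟩
      · intro x hx
        rw [Finset.mem_sdiff] at hx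
        have := Finset.mem_compl.mp (hV.1 hx.1)
        simp [hx.2, this]
      · intro he
        exact hV.2.2 (Finset.sdiff_eq_empty_iff_subset.mp he)
    · intro U hU
      simp only [Finset.mem_filter, Finset.mem_powerset] at hU
      ext x
      have := @hU.1 x
      simp at this ⊢
      tauto
    · intro V hV
      simp only [Finset.mem_filter, Finset.mem_powerset] at hV
      exact Finset.union_sdiff_of_subset hV.2.1
    · intro U _
      rw [Finset.union_assoc]
  rw [Finset.sum_congr rfl hT, ← Finset.mul_sum]
  congr 1
  have hcard : Sᶜ.card = N - S.card := by rw [Finset.card_compl, Fintype.card_fin]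
  have hstep : ∑ T ∈ Sᶜ.powersetCard j, ∑ V ∈ Sᶜ.powerset with T ⊂ V, Q (S ∪ V) =
      ∑ V ∈ Sᶜ.powerset, if j + 1 ≤ V.card then (V.card.choose j : ℝ) * Q (S ∪ V) else 0 := by
    simp_rw [Finset.sum_filter]
    rw [Finset.sum_comm]
    refine Finset.sum_congr rfl fun V hV => ?_
    rw [← Finset.sum_filter, Finset.sum_const, nsmul_eq_mul]
    rw [Finset.mem_powerset] at hV
    split_ifs with hjV
    · rw [← Finset.card_powersetCard]
      congr 3
      ext T
      simp only [Finset.mem_filter, Finset.mem_powersetCard]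
      constructor
      · rintro ⟨⟨_, h2⟩, h3⟩
        exact ⟨h3.1, h2⟩
      · rintro ⟨h1, h2⟩
        refine ⟨⟨h1.trans hV, h2⟩, Finset.ssubset_iff_subset_ne.mpr ⟨h1, ?_⟩⟩
        rintro rfl
        omega
    · rw [Finset.filter_eq_empty_iff.mpr]
      · simp
      · intro T hT hTV
        have := Finset.card_lt_card hTV
        rw [Finset.mem_powersetCard] at hT
        omega
  rw [hstep, Finset.sum_powerset, hcard]
  have hin : ∀ i ∈ Finset.range (N - S.card + 1),
      (∑ V ∈ Sᶜ.powersetCard i,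
        if j + 1 ≤ V.card then (V.card.choose j : ℝ) * Q (S ∪ V) else 0) =
      if j + 1 ≤ i then (i.choose j : ℝ) * ∑ T ∈ Sᶜ.powersetCard i, Q (S ∪ T) else 0 := by
    intro i _
    rw [Finset.mul_sum]
    split_ifs with hji
    · refine Finset.sum_congr rfl fun V hV => ?_
      rw [(Finset.mem_powersetCard.mp hV).2, if_pos hji]
    · refine Finset.sum_eq_zero fun V hV => ?_
      rw [(Finset.mem_powersetCard.mp hV).2, if_neg hji]
  rw [Finset.sum_congr rfl hin, ← Finset.sum_filter]
  refine Finset.sum_congr ?_ fun _ _ => rfl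
  ext i
  simp only [Finset.mem_filter, Finset.mem_range, Finset.mem_Icc]
  omega

theorem abstract_sums (n : ℕ) (q : ℕ → ℝ)
    (hq : ∀ k, q (2 * k + 1) = -(1 / 2) * ∑ i ∈ Finset.Icc (2 * k + 1 + 1) n,
      (i.choose (2 * k + 1) : ℝ) * q i) (l : ℕ) (hl : 2 * l ≤ n) :
    ∑ j ∈ Finset.Icc 1 (2 * l), q j =
      ∑ j ∈ Finset.Icc (2 * l + 1) n, (gam l j : ℝ) * q j := by
  induction l with
  | zero => simp [gam]
  | succ l ih =>
    have ih := ih (by omega)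
    have hs : ∀ (f : ℕ → ℝ) (a : ℕ), a ≤ n →
        ∑ j ∈ Finset.Icc a n, f j = f a + ∑ j ∈ Finset.Icc (a + 1) n, f j := by
      intro f a ha
      rw [← Finset.add_sum_Ioc_eq_sum_Icc ha]
      congr 1
      refine Finset.sum_congr ?_ fun _ _ => rfl
      ext i; simp only [Finset.mem_Ioc, Finset.mem_Icc]; omega
    rw [show 2 * (l + 1) = 2 * l + 1 + 1 by ring, Finset.sum_Icc_succ_top (by omega),
      Finset.sum_Icc_succ_top (by omega), ih, hs _ (2 * l + 1) (by omega)]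
    have hg : ∑ j ∈ Finset.Icc (2 * l + 1 + 1) n, (gam (l + 1) j : ℝ) * q j =
        ((gam l (2 * l + 1) : ℝ) + 1) * q (2 * l + 1)
          + ∑ j ∈ Finset.Icc (2 * l + 1 + 1) n, (gam l j : ℝ) * q j := by
      rw [hq l, Finset.mul_sum, Finset.mul_sum, ← Finset.sum_add_distrib]
      refine Finset.sum_congr rfl fun j _ => ?_
      rw [gam]; push_cast; ring
    have hd := hs (fun j => (gam (l + 1) j : ℝ) * q j) (2 * l + 1 + 1) (by omega)
    simp only [gam_diag l, show 2 * l + 1 + 1 = 2 * l + 2 by ring] at hd hg ⊢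
    push_cast at hd
    linarith

/-- (Proposition, expression of the even partial sums.) For `|S| = 2K+1` odd and
`1 ≤ l ≤ ⌊(N−1)/2⌋ − K`, the partial sum `S_{2l} = Σ_{j=1}^{2l} Q⁽ʲ⁾(S)` equals
`Σ_{j=2l+1}^{N−|S|} γ_j^{(2l)} Q⁽ʲ⁾(S)`. -/
theorem partial_sums_even_index (N : ℕ) (hN : 1 ≤ N)
    (Q : Finset (Fin N) → ℝ)
    (h : ∀ S : Finset (Fin N), Even S.card →
      Q S = -(1 / 2) * ∑ T ∈ Sᶜ.powerset.filter (· ≠ ∅), Q (S ∪ T)) :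
    ∀ (S : Finset (Fin N)) (K l : ℕ), S.card = 2 * K + 1 →
      1 ≤ l → K + l ≤ (N - 1) / 2 →
      ∑ j ∈ Finset.Icc 1 (2 * l), (∑ T ∈ Sᶜ.powersetCard j, Q (S ∪ T)) =
        ∑ j ∈ Finset.Icc (2 * l + 1) (N - S.card),
          (gam l j : ℝ) * ∑ T ∈ Sᶜ.powersetCard j, Q (S ∪ T) := by
  intro S K l hS _ hKl
  refine abstract_sums (N - S.card) (fun j => ∑ T ∈ Sᶜ.powersetCard j, Q (S ∪ T)) ?_ l (by omega)
  intro k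
  exact level_relation N Q h S (2 * k + 1) ⟨K + k + 1, by omega⟩
end

section
/- (Theorem 3, symmetric relations.) If Q satisfies the odd-m relations, i.e. for every S ⊆ Fin N with |S| odd one has Q(S) = −(1/2) · Σ_{T ⊆ Sᶜ, T ≠ ∅} Q(S ∪ T), then Q also satisfies the even-m relations: for every S ⊆ Fin N with |S| even, Σ_{T ⊆ Sᶜ, T ≠ ∅} Q(S ∪ T) = 0. -/
lemma aux_inner {α : Type*} [Fintype α] [DecidableEq α] (S V : Finset α) (hSV : S ⊆ V) :
    ∑ U ∈ Finset.univ.filter (fun U => S ⊆ U ∧ U ⊆ V), (-1 : ℝ) ^ U.card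
      = if S = V then (-1 : ℝ) ^ S.card else 0 := by
  split_ifs with h
  · subst h
    have : Finset.univ.filter (fun U => S ⊆ U ∧ U ⊆ S) = {S} := by
      ext U
      simp only [Finset.mem_filter, Finset.mem_univ, true_and, Finset.mem_singleton]
      exact ⟨fun h => h.2.antisymm h.1, fun h => by subst h; simp⟩
    rw [this, Finset.sum_singleton]
  · obtain ⟨a, haV, haS⟩ := Finset.exists_of_ssubset (hSV.ssubset_of_ne h)
    refine Finset.sum_involution (fun U _ => if a ∈ U then U.erase a else insert a U) ?_ ?_ ?_ ?_
    · intro U hU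
      by_cases ha : a ∈ U
      · have := Finset.card_erase_add_one ha
        simp only [ha, if_true]
        rw [← this, pow_succ]; ring
      · simp only [ha, if_false, Finset.card_insert_of_notMem ha, pow_succ]
        simp
    · intro U hU _ he
      by_cases ha : a ∈ U
      · simp only [ha, if_true] at he
        rw [← he] at ha; simp at ha
      · simp only [ha, if_false] at he
        rw [← he] at ha; simp at ha
    · intro U hU
      simp only [Finset.mem_filter, Finset.mem_univ, true_and] at hU ⊢
      by_cases ha : a ∈ U
      · simp only [ha, if_true]
        exact ⟨Finset.subset_erase.2 ⟨hU.1, haS⟩, (Finset.erase_subset _ _).trans hU.2⟩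
      · simp only [ha, if_false]
        exact ⟨hU.1.trans (Finset.subset_insert _ _), Finset.insert_subset haV hU.2⟩
    · intro U hU
      by_cases ha : a ∈ U
      · simp [ha]
      · simp [ha]

lemma aux_split {α : Type*} [Fintype α] [DecidableEq α] (Q : Finset α → ℝ) (S : Finset α) :
    ∑ U ∈ Finset.univ.filter (fun U => S ⊆ U), Q U
      = Q S + ∑ U ∈ Finset.univ.filter (fun U => S ⊂ U), Q U := by
  have : Finset.univ.filter (fun U => S ⊆ U)
      = insert S (Finset.univ.filter (fun U => S ⊂ U)) := by
    ext U
    simp only [Finset.mem_filter, Finset.mem_univ, true_and, Finset.mem_insert]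
    rw [← Finset.le_iff_subset, le_iff_lt_or_eq, Finset.lt_iff_ssubset]
    grind
  rw [this, Finset.sum_insert (by simp)]

lemma aux_moebius {α : Type*} [Fintype α] [DecidableEq α] (Q : Finset α → ℝ) (S : Finset α) :
    ∑ U ∈ Finset.univ.filter (fun U => S ⊆ U),
      (-1 : ℝ) ^ U.card * ∑ V ∈ Finset.univ.filter (fun V => U ⊆ V), Q V
      = (-1 : ℝ) ^ S.card * Q S := by
  simp_rw [Finset.mul_sum]
  rw [Finset.sum_comm' (t' := Finset.univ.filter (fun V => S ⊆ V))
    (s' := fun V => Finset.univ.filter (fun U => S ⊆ U ∧ U ⊆ V))]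
  · have : ∀ V ∈ Finset.univ.filter (fun V => S ⊆ V),
        ∑ U ∈ Finset.univ.filter (fun U => S ⊆ U ∧ U ⊆ V), (-1 : ℝ) ^ U.card * Q V
        = if S = V then (-1 : ℝ) ^ S.card * Q V else 0 := by
      intro V hV
      rw [← Finset.sum_mul, aux_inner S V (by simpa using hV)]
      split_ifs <;> simp
    rw [Finset.sum_congr rfl this, Finset.sum_ite_eq]
    simp
  · intro U V
    simp only [Finset.mem_filter, Finset.mem_univ, true_and]
    exact ⟨fun h => ⟨h, h.1.trans h.2⟩, fun h => h.1⟩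

lemma aux_reindex {α : Type*} [Fintype α] [DecidableEq α] (Q : Finset α → ℝ) (S : Finset α) :
    ∑ T ∈ Sᶜ.powerset.filter (· ≠ ∅), Q (S ∪ T)
      = ∑ U ∈ Finset.univ.filter (fun U => S ⊂ U), Q U := by
  refine Finset.sum_bij' (fun T _ => S ∪ T) (fun U _ => U \ S) ?_ ?_ ?_ ?_ ?_
  · intro T hT
    simp only [Finset.mem_filter, Finset.mem_powerset, Finset.mem_univ, true_and] at hT ⊢
    obtain ⟨x, hx⟩ := Finset.nonempty_iff_ne_empty.2 hT.2
    refine Finset.ssubset_iff_subset_ne.2 ⟨Finset.subset_union_left, fun he => ?_⟩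
    have h1 : x ∈ S := by rw [he]; exact Finset.mem_union_right _ hx
    exact (Finset.mem_compl.1 (hT.1 hx)) h1
  · intro U hU
    simp only [Finset.mem_filter, Finset.mem_powerset, Finset.mem_univ, true_and] at hU ⊢
    refine ⟨fun x hx => by simp at hx ⊢; exact hx.2, fun he => ?_⟩
    exact hU.2 (Finset.sdiff_eq_empty_iff_subset.1 he)
  · intro T hT
    simp only [Finset.mem_filter, Finset.mem_powerset] at hT
    ext x
    have := @hT.1 x
    simp only [Finset.mem_compl] at this
    simp only [Finset.mem_sdiff, Finset.mem_union]
    tauto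
  · intro U hU
    simp only [Finset.mem_filter, Finset.mem_univ, true_and] at hU
    exact Finset.union_sdiff_of_subset hU.1
  · intro T hT
    rfl

/-- (Theorem 3, symmetric relations.) If `Q` satisfies the odd-`m` relations,
then it also satisfies the even-`m` relations. -/
theorem even_relations_from_odd_relations (N : ℕ) (hN : 1 ≤ N)
    (Q : Finset (Fin N) → ℝ)
    (h : ∀ S : Finset (Fin N), Odd S.card →
      Q S = -(1 / 2) * ∑ T ∈ Sᶜ.powerset.filter (· ≠ ∅), Q (S ∪ T)) :
    ∀ S : Finset (Fin N), Even S.card →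
      ∑ T ∈ Sᶜ.powerset.filter (· ≠ ∅), Q (S ∪ T) = 0 := by
  have key : ∀ n : ℕ, ∀ S : Finset (Fin N), Sᶜ.card = n →
      (-1 : ℝ) ^ S.card * ∑ V ∈ Finset.univ.filter (fun V => S ⊆ V), Q V - Q S = 0 := by
    intro n
    induction n using Nat.strong_induction_on with
    | _ n ih =>
      intro S hS
      rcases Nat.even_or_odd S.card with he | ho
      · have hm := aux_moebius Q S
        have hs := aux_split (fun U => (-1 : ℝ) ^ U.card *
          ∑ V ∈ Finset.univ.filter (fun V => U ⊆ V), Q V - Q U) S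
        have hz : ∑ U ∈ Finset.univ.filter (fun U => S ⊂ U), ((-1 : ℝ) ^ U.card *
          ∑ V ∈ Finset.univ.filter (fun V => U ⊆ V), Q V - Q U) = 0 := by
          refine Finset.sum_eq_zero fun U hU => ih _ ?_ U rfl
          rw [← hS]
          exact Finset.card_lt_card (Finset.compl_ssubset_compl.2 (by simpa using hU))
        rw [hz, Finset.sum_sub_distrib, hm] at hs
        simp only [he.neg_one_pow, one_mul] at hs ⊢
        linarith
      · have h1 := h S ho
        rw [aux_reindex] at h1
        rw [aux_split, ho.neg_one_pow]
        linarith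
  intro S he
  have h1 := key _ S rfl
  rw [aux_split, he.neg_one_pow] at h1
  rw [aux_reindex]
  linarith
end

section
/- (Identity (79) for the constant terms of Euler polynomials.) For every integer j ≥ 2, e₀(2j−1) = 1/4 − (1/2) · Σ_{i=2}^{j−1} C(2j−2, 2i−2) · e₀(2i−1), where C(p, q) denotes the binomial coefficient. Equivalently, the recurrence-defined coefficients γ₁ = −1/2, γ_{2j−1} = 1/4 − (1/2)Σ_{i=2}^{j−1} C(2j−2, 2i−2) γ_{2i−1} coincide with the constant terms of the odd Euler polynomials. -/
open PowerSeries in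
noncomputable def eulerPS : PowerSeries ℚ := PowerSeries.mk fun n => eulerConst n / n.factorial

open PowerSeries in
lemma X_mul_eulerPS :
    X * eulerPS = 2 * (bernoulliPowerSeries ℚ - rescale (2:ℚ) (bernoulliPowerSeries ℚ)) := by
  ext n
  have h2 : (2 : PowerSeries ℚ) = C (2:ℚ) := (map_ofNat C 2).symm
  rw [h2, coeff_C_mul]
  cases n with
  | zero => rw [map_sub, coeff_rescale]; simp
  | succ n =>
    rw [coeff_succ_X_mul]
    simp only [eulerPS, bernoulliPowerSeries, coeff_mk, map_sub, coeff_rescale, eulerConst,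
      Nat.factorial_succ, Algebra.algebraMap_self, RingHom.id_apply]
    have : (n.factorial : ℚ) ≠ 0 := by positivity
    have : (n + 1 : ℚ) ≠ 0 := by positivity
    push_cast
    field_simp
    try ring

open PowerSeries in
lemma exp_mul_eulerPS : (exp ℚ + 1) * eulerPS = 2 := by
  have hB := bernoulliPowerSeries_mul_exp_sub_one ℚ
  have hR := congrArg (rescale (2:ℚ)) hB
  have hexp : rescale (2:ℚ) (exp ℚ) = exp ℚ ^ 2 := by
    have := exp_pow_eq_rescale_exp (A := ℚ) 2
    simpa using this.symm
  have hX : rescale (2:ℚ) (X : PowerSeries ℚ) = 2 * X := by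
    rw [rescale_X, map_ofNat]
  rw [map_mul, map_sub, map_one, hexp, hX] at hR
  have hne : (exp ℚ - 1 : PowerSeries ℚ) ≠ 0 := by
    intro h
    rw [h, mul_zero] at hB
    exact X_ne_zero hB.symm
  have hXne : (X : PowerSeries ℚ) ≠ 0 := X_ne_zero
  have key : (exp ℚ - 1) * X * ((exp ℚ + 1) * eulerPS) = (exp ℚ - 1) * X * 2 := by
    linear_combination (exp ℚ ^ 2 - 1) * X_mul_eulerPS + 2 * (exp ℚ + 1) * hB - 2 * hR
  exact mul_left_cancel₀ (mul_ne_zero hne hXne) key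

open PowerSeries in
lemma deriv_eulerPS :
    d⁄dX ℚ eulerPS * (exp ℚ + 2 + rescale (-1:ℚ) (exp ℚ)) = -2 := by
  have h := exp_mul_eulerPS
  have hd := congrArg (d⁄dX ℚ) h
  have h2 : d⁄dX ℚ (2 : PowerSeries ℚ) = 0 := by
    have : (2 : PowerSeries ℚ) = C (2:ℚ) := (map_ofNat C 2).symm
    rw [this]; exact derivative_C
  have hexp : d⁄dX ℚ (exp ℚ) = exp ℚ := by
    ext n
    have : (n.factorial : ℚ) ≠ 0 := by positivity
    have : (n + 1 : ℚ) ≠ 0 := by positivity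
    simp [coeff_derivative, coeff_exp, Nat.factorial_succ]
    field_simp
  rw [h2, Derivation.leibniz, map_add, hexp, Derivation.map_one_eq_zero] at hd
  simp only [smul_eq_mul, add_zero] at hd
  have hn : exp ℚ * rescale (-1:ℚ) (exp ℚ) = 1 := exp_mul_exp_neg_eq_one
  set E := exp ℚ
  set N := rescale (-1:ℚ) E
  set D := d⁄dX ℚ eulerPS
  linear_combination N * (E + 1) * hd - N * E * h - (2 + D * (E + 2)) * hn

lemma sum_euler (m : ℕ) (hm : 0 < m) :
    ∑ k ∈ Finset.range (m + 1), (m.choose k : ℚ) * eulerConst (k + 1) * (1 + (-1) ^ (m - k))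
      + 2 * eulerConst (m + 1) = 0 := by
  have h := congrArg (PowerSeries.coeff m) deriv_eulerPS
  have h2 : (2 : PowerSeries ℚ) = PowerSeries.C (2:ℚ) := (map_ofNat PowerSeries.C 2).symm
  have hfac : (m.factorial : ℚ) ≠ 0 := by positivity
  rw [show PowerSeries.exp ℚ + 2 + PowerSeries.rescale (-1:ℚ) (PowerSeries.exp ℚ)
    = (PowerSeries.exp ℚ + PowerSeries.rescale (-1:ℚ) (PowerSeries.exp ℚ)) + 2 by ring,
    mul_add, map_add, h2, PowerSeries.coeff_mul_C, ← map_neg, PowerSeries.coeff_C,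
    if_neg hm.ne', PowerSeries.coeff_mul,
    Finset.Nat.sum_antidiagonal_eq_sum_range_succ_mk] at h
  have hD : ∀ k, PowerSeries.coeff k (PowerSeries.derivative ℚ eulerPS)
      = eulerConst (k + 1) / k.factorial := by
    intro k
    have : (k.factorial : ℚ) ≠ 0 := by positivity
    have : (k + 1 : ℚ) ≠ 0 := by positivity
    rw [PowerSeries.coeff_derivative, eulerPS, PowerSeries.coeff_mk, Nat.factorial_succ]
    push_cast
    field_simp
  have h3 := congrArg (fun x => (m.factorial : ℚ) * x) h
  simp only [mul_add, Finset.mul_sum, mul_zero] at h3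
  rw [← h3]
  congr 1
  · apply Finset.sum_congr rfl
    intro k hk
    have hk' : k ≤ m := by simpa [Nat.lt_succ_iff] using hk
    rw [hD, Nat.cast_choose ℚ hk', map_add, PowerSeries.coeff_rescale, PowerSeries.coeff_exp]
    simp only [Algebra.algebraMap_self, RingHom.id_apply]
    have : (k.factorial : ℚ) ≠ 0 := by positivity
    have : ((m - k).factorial : ℚ) ≠ 0 := by positivity
    field_simp
  · rw [hD]; field_simp

lemma sum_range_odd (f : ℕ → ℚ) (hf : ∀ k, f (2 * k + 1) = 0) (n : ℕ) :
    ∑ k ∈ Finset.range (2 * n + 1), f k = ∑ k ∈ Finset.range (n + 1), f (2 * k) := by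
  induction n with
  | zero => simp
  | succ n ih =>
    rw [show 2 * (n + 1) + 1 = 2 * n + 1 + 1 + 1 by ring, Finset.sum_range_succ,
      Finset.sum_range_succ, ih, hf, Finset.sum_range_succ _ (n + 1),
      show 2 * n + 1 + 1 = 2 * (n + 1) by ring]
    ring

/-- (Identity (79).) For every `j ≥ 2`,
`e₀(2j−1) = 1/4 − (1/2) Σ_{i=2}^{j−1} C(2j−2, 2i−2) e₀(2i−1)`. -/
theorem euler_constant_term_recurrence (j : ℕ) (hj : 2 ≤ j) :
    eulerConst (2 * j - 1) =
      1 / 4 - (1 / 2) * ∑ i ∈ Finset.Icc 2 (j - 1),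
        ((2 * j - 2).choose (2 * i - 2) : ℚ) * eulerConst (2 * i - 1) := by
  obtain ⟨n, rfl⟩ : ∃ n, j = n + 2 := ⟨j - 2, by omega⟩
  have h := sum_euler (2 * (n + 1)) (by omega)
  rw [sum_range_odd, Finset.sum_range_succ, Finset.sum_range_succ'] at h
  · have e1 : eulerConst 1 = -1 / 2 := by norm_num [eulerConst, bernoulli_two]
    have hs : ∑ i ∈ Finset.Icc 2 (n + 2 - 1),
        ((2 * (n + 2) - 2).choose (2 * i - 2) : ℚ) * eulerConst (2 * i - 1)
        = ∑ k ∈ Finset.range n,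
          ((2 * (n + 1)).choose (2 * (k + 1)) : ℚ) * eulerConst (2 * (k + 1) + 1) := by
      rw [show Finset.Icc 2 (n + 2 - 1) = Finset.Ico 2 (n + 2) by ext; simp; omega,
        Finset.sum_Ico_eq_sum_range]
      apply Finset.sum_congr (by simp)
      intro k _
      rw [show 2 * (n + 2) - 2 = 2 * (n + 1) by omega, show 2 * (2 + k) - 2 = 2 * (k + 1) by omega,
        show 2 * (2 + k) - 1 = 2 * (k + 1) + 1 by omega]
    have hs2 : ∑ k ∈ Finset.range n, ((2 * (n + 1)).choose (2 * (k + 1)) : ℚ)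
          * eulerConst (2 * (k + 1) + 1) * (1 + (-1) ^ (2 * (n + 1) - 2 * (k + 1)))
        = (∑ k ∈ Finset.range n,
          ((2 * (n + 1)).choose (2 * (k + 1)) : ℚ) * eulerConst (2 * (k + 1) + 1)) * 2 := by
      rw [Finset.sum_mul]
      apply Finset.sum_congr rfl
      intro k _
      rw [← Nat.mul_sub, pow_mul]
      norm_num
    rw [hs2] at h
    rw [hs, show 2 * (n + 2) - 1 = 2 * (n + 1) + 1 by omega]
    simp only [mul_zero, Nat.choose_zero_right, zero_add, e1, Nat.sub_zero, Nat.choose_self,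
      Nat.sub_self, pow_zero, pow_mul] at h
    norm_num at h
    linarith
  · intro k
    rcases Nat.lt_or_ge (2 * (n + 1)) (2 * k + 1) with hk | hk
    · rw [Nat.choose_eq_zero_of_lt hk]; simp
    · have : Odd (2 * (n + 1) - (2 * k + 1)) := ⟨n - k, by omega⟩
      rw [this.neg_one_pow]; ring
end
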